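/- arXiv:1407.3951 — 13 statements merged into one kernel-verified Lean document; each statement's English description precedes it below -/
import Mathlib

section
/- Let Y be a compact, path-connected metric space having at least two points and such that there exists a continuous surjection from I onto Y. Then the set CS(I,Y) of continuous surjections I → Y is not a compact subset of C(I,Y) endowed with the uniform metric ρ. -/
/-- There is a continuous surjection of the interval fixing `0` and sending `1` to `a`. -/
theorem exists_reparam (a : unitInterval) : ∃ p : C(unitInterval, unitInterval),
    Function.Surjective ⇑p ∧ p 0 = 0 ∧ p 1 = a := by
  have ha0 := a.2.1
  have ha1 := a.2.2
  refine ⟨⟨fun t => Set.projIcc (0:ℝ) 1 zero_le_one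
    (min (2 * (t:ℝ)) (1 - (1 - (a:ℝ)) * (2 * t - 1))), ?_⟩, ?_, ?_, ?_⟩
  · exact continuous_projIcc.comp (by fun_prop)
  · intro s
    have hs0 := s.2.1
    have hs1 := s.2.2
    refine ⟨⟨(s:ℝ) / 2, by constructor <;> linarith⟩, ?_⟩
    have h : min (2 * ((s:ℝ) / 2)) (1 - (1 - (a:ℝ)) * (2 * ((s:ℝ) / 2) - 1)) = s := by
      rw [min_eq_left (by nlinarith)]
      ring
    simp only [ContinuousMap.coe_mk, h]
    exact Set.projIcc_val zero_le_one s
  · have h : min (2 * (0:ℝ)) (1 - (1 - (a:ℝ)) * (2 * 0 - 1)) = 0 := by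
      rw [min_eq_left (by nlinarith)]
      ring
    simp only [ContinuousMap.coe_mk, Set.Icc.coe_zero, h]
    exact Set.projIcc_left zero_le_one
  · have h : min (2 * (1:ℝ)) (1 - (1 - (a:ℝ)) * (2 * 1 - 1)) = a := by
      rw [min_eq_right (by nlinarith)]
      ring
    simp only [ContinuousMap.coe_mk, Set.Icc.coe_one, h]
    exact Set.projIcc_val zero_le_one a

/-- The point `1/(n+1)` of the interval. -/
noncomputable def invPt (n : ℕ) : unitInterval :=
  ⟨1 / ((n:ℝ) + 1), by positivity, by
    rw [div_le_one (by positivity)]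
    have : (0:ℝ) ≤ n := n.cast_nonneg
    linarith⟩

theorem exists_fast (n : ℕ) : ∃ p : C(unitInterval, unitInterval),
    Function.Surjective ⇑p ∧ p 0 = 0 ∧ p (invPt n) = 1 := by
  have hn : (0:ℝ) ≤ n := n.cast_nonneg
  have hn' : (n:ℝ) + 1 ≠ 0 := by positivity
  refine ⟨⟨fun t => Set.projIcc (0:ℝ) 1 zero_le_one (((n:ℝ) + 1) * t), ?_⟩, ?_, ?_, ?_⟩
  · exact continuous_projIcc.comp (by fun_prop)
  · intro s
    have hs0 := s.2.1
    have hs1 := s.2.2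
    refine ⟨⟨(s:ℝ) / ((n:ℝ) + 1), by positivity, ?_⟩, ?_⟩
    · rw [div_le_one (by positivity)]
      linarith
    · have h : ((n:ℝ) + 1) * ((s:ℝ) / ((n:ℝ) + 1)) = s := by field_simp
      simp only [ContinuousMap.coe_mk, h]
      exact Set.projIcc_val zero_le_one s
  · simp only [ContinuousMap.coe_mk, Set.Icc.coe_zero, mul_zero]
    exact Set.projIcc_left zero_le_one
  · have h : ((n:ℝ) + 1) * (1 / ((n:ℝ) + 1)) = 1 := by field_simp
    simp only [ContinuousMap.coe_mk, invPt, h]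
    exact Set.projIcc_right zero_le_one

theorem tendsto_invPt : Filter.Tendsto invPt Filter.atTop (nhds 0) := by
  rw [tendsto_subtype_rng]
  exact tendsto_one_div_add_atTop_nhds_zero_nat

theorem peano_not_compact (Y : Type*) [MetricSpace Y] [CompactSpace Y]
    [PathConnectedSpace Y] [Nontrivial Y]
    (hY : ∃ f : C(unitInterval, Y), Function.Surjective ⇑f) :
    ¬ IsCompact {f : C(unitInterval, Y) | Function.Surjective ⇑f} := by
  intro hc
  obtain ⟨f, hf⟩ := hY
  obtain ⟨y, hy⟩ := exists_ne (f 0)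
  obtain ⟨a, rfl⟩ := hf y
  obtain ⟨p, hp, hp0, hp1⟩ := exists_reparam a
  choose q hq hq0 hq1 using exists_fast
  obtain ⟨h, -, k, hk, hlim⟩ := hc.tendsto_subseq
    (x := fun n => (f.comp p).comp (q n)) (fun n => (hf.comp hp).comp (hq n))
  have h0 : Filter.Tendsto (fun n => ((f.comp p).comp (q (k n))) 0) Filter.atTop
      (nhds (h 0)) :=
    (ContinuousEval.continuous_eval.tendsto (h, (0 : unitInterval))).comp
      (hlim.prodMk_nhds tendsto_const_nhds)
  have h1 : Filter.Tendsto (fun n => ((f.comp p).comp (q (k n))) (invPt (k n)))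
      Filter.atTop (nhds (h 0)) :=
    (ContinuousEval.continuous_eval.tendsto (h, (0 : unitInterval))).comp
      (hlim.prodMk_nhds (tendsto_invPt.comp hk.tendsto_atTop))
  simp only [ContinuousMap.comp_apply, hq0, hq1, hp0, hp1] at h0 h1
  exact hy ((tendsto_nhds_unique h1 tendsto_const_nhds).symm.trans
    (tendsto_nhds_unique h0 tendsto_const_nhds))
end

section
/- The set 𝒫 = CS(I,I²) of Peano curves is strongly porous in the metric space (C(I,I²), ρ): for every α ∈ (0,1), every f ∈ C(I,I²) and every ε > 0, there exists g ∈ C(I,I²) with 0 < ρ(f,g) < ε such that the open ball B_ρ(g, α·ρ(f,g)) contains no continuous surjection of I onto I². -/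
theorem peano_aux (α : ℝ) (hα : α ∈ Set.Ioo (0 : ℝ) 1)
    (f g : C(unitInterval, unitInterval × unitInterval)) (hne : f ≠ g)
    (hg : ∀ s, ((g s).1 : ℝ) + dist f g ≤ 1) :
    ∀ h ∈ Metric.ball g (α * dist f g), ¬ Function.Surjective ⇑h := by
  intro h hh hs
  obtain ⟨s, hs⟩ := hs (1, 1)
  have h0 : 0 < dist f g := dist_pos.2 hne
  have h1 : dist h g < α * dist f g := hh
  have h2 : dist (h s) (g s) ≤ dist h g := ContinuousMap.dist_apply_le_dist s
  have h3 : dist (h s).1 (g s).1 ≤ dist (h s) (g s) := by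
    rw [Prod.dist_eq]; exact le_max_left _ _
  rw [Subtype.dist_eq, Real.dist_eq, hs] at h3
  have h4 := le_abs_self (((1 : unitInterval) : ℝ) - ((g s).1 : ℝ))
  have h5 : ((1 : unitInterval) : ℝ) = 1 := rfl
  have h6 := hg s
  dsimp only at h3
  rw [h5] at h3 h4
  rw [hs] at h2
  nlinarith [hα.2]

theorem peano_mod (f : C(unitInterval, unitInterval × unitInterval))
    (φ : C(unitInterval, unitInterval)) (d : ℝ) (hd : 0 ≤ d)
    (h : ∀ s, |((f s).1 : ℝ) - φ s| ≤ d) :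
    dist f (φ.prodMk (ContinuousMap.snd.comp f)) ≤ d := by
  rw [ContinuousMap.dist_le hd]
  intro s
  rw [Prod.dist_eq]
  refine max_le (h s) ?_
  simpa using hd

theorem peano_strongly_porous (α : ℝ) (hα : α ∈ Set.Ioo (0 : ℝ) 1)
    (f : C(unitInterval, unitInterval × unitInterval)) (ε : ℝ) (hε : 0 < ε) :
    ∃ g : C(unitInterval, unitInterval × unitInterval),
      0 < dist f g ∧ dist f g < ε ∧
      ∀ h ∈ Metric.ball g (α * dist f g), ¬ Function.Surjective ⇑h := by
  obtain ⟨δ, hδ0, hδε, hδ2⟩ : ∃ δ : ℝ, 0 < δ ∧ δ < ε ∧ δ ≤ 1 / 2 :=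
    ⟨min (ε / 2) (1 / 2), by positivity, (min_le_left _ _).trans_lt (by linarith), min_le_right _ _⟩
  obtain ⟨t, -, ht⟩ := isCompact_univ.exists_isMaxOn (Set.univ_nonempty (α := unitInterval))
    (f := fun s => ((f s).1 : ℝ)) (by fun_prop)
  have hM : ∀ s, ((f s).1 : ℝ) ≤ (f t).1 := fun s => ht (Set.mem_univ s)
  have hp : ∀ s, (0 : ℝ) ≤ (f s).1 := fun s => (f s).1.2.1
  have h1 : ((f t).1 : ℝ) ≤ 1 := (f t).1.2.2
  suffices H : ∃ φ : C(unitInterval, unitInterval), ∃ d : ℝ, 0 ≤ d ∧ d < ε ∧ (φ t ≠ (f t).1) ∧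
      (∀ s, |((f s).1 : ℝ) - φ s| ≤ d) ∧ ∀ s, (φ s : ℝ) + d ≤ 1 by
    obtain ⟨φ, d, hd, hdε, hne, hc, hs⟩ := H
    have hle := peano_mod f φ d hd hc
    have hne' : f ≠ φ.prodMk (ContinuousMap.snd.comp f) := fun e =>
      hne (congrArg Prod.fst (DFunLike.congr_fun e t)).symm
    refine ⟨_, dist_pos.2 hne', hle.trans_lt hdε, peano_aux α hα f _ hne' fun s => ?_⟩
    have := hs s
    change (φ s : ℝ) + _ ≤ 1
    linarith
  rcases (hp t).eq_or_lt with h0 | h0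
  · refine ⟨ContinuousMap.const _ ⟨δ, hδ0.le, by linarith⟩, δ, hδ0.le, hδε, ?_, ?_, ?_⟩
    · intro e
      have : δ = ((f t).1 : ℝ) := congrArg Subtype.val e
      linarith
    · intro s
      have h2 := hM s
      have h3 := hp s
      change |((f s).1 : ℝ) - δ| ≤ δ
      rw [abs_le]; constructor <;> linarith
    · intro s
      change δ + δ ≤ 1
      linarith
  · have hc : (1 - δ) ∈ unitInterval := ⟨by linarith, by linarith⟩
    refine ⟨⟨fun s => (⟨1 - δ, hc⟩ : unitInterval) * (f s).1, by fun_prop⟩,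
      δ * (f t).1, by positivity, by nlinarith, ?_, ?_, ?_⟩
    · intro e
      have : (1 - δ) * ((f t).1 : ℝ) = ((f t).1 : ℝ) := congrArg Subtype.val e
      nlinarith
    · intro s
      have h2 := hM s
      have h3 := hp s
      change |((f s).1 : ℝ) - (1 - δ) * (f s).1| ≤ _
      rw [abs_le]; constructor <;> nlinarith
    · intro s
      have h2 := hM s
      change (1 - δ) * ((f s).1 : ℝ) + _ ≤ 1
      nlinarith
end

section
/- For every N ∈ ℕ there exist continuous maps f₁, …, f_N : I → ℝ² such that the range of each f_i is exactly I² (so each f_i is a Peano curve) and the range of the pointwise sum f₁ + ⋯ + f_N is also exactly I². -/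
theorem exists_surj_aux (N : ℕ) :
    ∃ g : C(unitInterval, Fin N → Set.Icc (0:ℝ) 1 × Set.Icc (0:ℝ) 1), Function.Surjective g := by
  obtain ⟨h, hc, hs⟩ := exists_nat_bool_continuous_surjective_of_compact
    (Fin N → Set.Icc (0:ℝ) 1 × Set.Icc (0:ℝ) 1)
  let F : C(cantorSet, Fin N → Set.Icc (0:ℝ) 1 × Set.Icc (0:ℝ) 1) :=
    ⟨h ∘ cantorSetHomeomorphNatToBool, hc.comp cantorSetHomeomorphNatToBool.continuous⟩
  obtain ⟨G, hG⟩ := ContinuousMap.exists_restrict_eq isClosed_cantorSet F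
  refine ⟨G.comp ⟨Subtype.val, continuous_subtype_val⟩, fun y => ?_⟩
  obtain ⟨c, hc⟩ := hs y
  refine ⟨⟨cantorSetHomeomorphNatToBool.symm c,
    cantorSet_subset_unitInterval (cantorSetHomeomorphNatToBool.symm c).2⟩, ?_⟩
  have := congrArg (fun k => k (cantorSetHomeomorphNatToBool.symm c)) hG
  simpa [F, hc] using this

theorem sum_norm_aux {N : ℕ} (x : Fin N → ℝ) (hx : ∀ i, 0 ≤ x i) :
    (∀ i, x i / max 1 (∑ j, x j) ∈ Set.Icc (0:ℝ) 1) ∧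
    ∑ i, x i / max 1 (∑ j, x j) ∈ Set.Icc (0:ℝ) 1 := by
  have hp : 0 < max 1 (∑ j, x j) := lt_max_of_lt_left one_pos
  refine ⟨fun i => ⟨div_nonneg (hx i) hp.le, ?_⟩,
    Finset.sum_nonneg fun i _ => div_nonneg (hx i) hp.le, ?_⟩
  · rw [div_le_one hp]
    exact (Finset.single_le_sum (fun j _ => hx j) (Finset.mem_univ i)).trans (le_max_right _ _)
  · rw [← Finset.sum_div, div_le_one hp]
    exact le_max_right _ _

theorem sum_of_peano_curves (N : ℕ) (hN : 0 < N) :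
    ∃ f : Fin N → C(unitInterval, ℝ × ℝ),
      (∀ i, Set.range ⇑(f i) = Set.Icc (0 : ℝ) 1 ×ˢ Set.Icc (0 : ℝ) 1) ∧
      Set.range ⇑(∑ i, f i) = Set.Icc (0 : ℝ) 1 ×ˢ Set.Icc (0 : ℝ) 1 := by
  obtain ⟨g, hg⟩ := exists_surj_aux N
  have hne : ∀ (u : unitInterval → ℝ) t, max 1 (u t) ≠ 0 := fun u t =>
    (lt_max_of_lt_left one_pos).ne'
  let f : Fin N → C(unitInterval, ℝ × ℝ) := fun i =>
    ⟨fun t => (((g t i).1 : ℝ) / max 1 (∑ j, ((g t j).1 : ℝ)),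
      ((g t i).2 : ℝ) / max 1 (∑ j, ((g t j).2 : ℝ))), by
      refine Continuous.prodMk (Continuous.div ?_ ?_ (hne _)) (Continuous.div ?_ ?_ (hne _)) <;>
      fun_prop⟩
  have h1 := fun t => sum_norm_aux (fun i => ((g t i).1 : ℝ)) (fun i => (g t i).1.2.1)
  have h2 := fun t => sum_norm_aux (fun i => ((g t i).2 : ℝ)) (fun i => (g t i).2.2.1)
  -- every point of the square is attained by `f i` with all other `f j` vanishing
  have key : ∀ (i : Fin N), ∀ p ∈ Set.Icc (0 : ℝ) 1 ×ˢ Set.Icc (0 : ℝ) 1,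
      ∃ t, ∀ j, f j t = if j = i then p else 0 := by
    rintro i ⟨a, b⟩ ⟨ha, hb⟩
    obtain ⟨t, ht⟩ := hg (fun j => if j = i then (⟨a, ha⟩, ⟨b, hb⟩) else (0, 0))
    have e1 : ∀ j, ((g t j).1 : ℝ) = if j = i then a else 0 := by
      intro j; rw [ht]; dsimp only; split_ifs <;> rfl
    have e2 : ∀ j, ((g t j).2 : ℝ) = if j = i then b else 0 := by
      intro j; rw [ht]; dsimp only; split_ifs <;> rfl
    refine ⟨t, fun j => ?_⟩
    have m1 : max 1 a = 1 := max_eq_left ha.2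
    have m2 : max 1 b = 1 := max_eq_left hb.2
    simp only [f, ContinuousMap.coe_mk, e1, e2, Finset.sum_ite_eq', Finset.sum_ite_eq,
      Finset.mem_univ, if_true, m1, m2, div_one]
    split_ifs <;> rfl
  refine ⟨f, fun i => Set.Subset.antisymm ?_ ?_, Set.Subset.antisymm ?_ ?_⟩
  · rintro _ ⟨t, rfl⟩
    exact ⟨(h1 t).1 i, (h2 t).1 i⟩
  · intro p hp
    obtain ⟨t, ht⟩ := key i p hp
    exact ⟨t, by simp [ht]⟩
  · rintro _ ⟨t, rfl⟩
    rw [ContinuousMap.sum_apply]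
    refine ⟨?_, ?_⟩
    · rw [Prod.fst_sum]; exact (h1 t).2
    · rw [Prod.snd_sum]; exact (h2 t).2
  · intro p hp
    obtain ⟨t, ht⟩ := key ⟨0, hN⟩ p hp
    exact ⟨t, by simp [ContinuousMap.sum_apply, ht]⟩
end

section
/- For every closed interval [a,b] ⊆ ℝ with a < b and every pair of points u, v ∈ I², there exists a continuous surjection Φ : [a,b] → I² such that Φ(a) = u and Φ(b) = v. -/
theorem peano_aux_s7 : ∃ G : ℝ → ℝ × ℝ, Continuous G ∧
    (∀ t, G t ∈ Set.Icc (0 : ℝ) 1 ×ˢ Set.Icc (0 : ℝ) 1) ∧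
    ∀ p ∈ Set.Icc (0 : ℝ) 1 ×ˢ Set.Icc (0 : ℝ) 1, ∃ t ∈ Set.Icc (0 : ℝ) 1, G t = p := by
  obtain ⟨f, hf, hs⟩ := exists_nat_bool_continuous_surjective_of_compact
    (unitInterval × unitInterval)
  let g : C(cantorSet, unitInterval × unitInterval) :=
    ⟨f ∘ cantorSetHomeomorphNatToBool, hf.comp cantorSetHomeomorphNatToBool.continuous⟩
  obtain ⟨G, hG⟩ := ContinuousMap.exists_restrict_eq isClosed_cantorSet g
  refine ⟨fun t => ((G t).1, (G t).2), by fun_prop, fun t => ⟨(G t).1.2, (G t).2.2⟩, ?_⟩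
  rintro ⟨x, y⟩ ⟨hx, hy⟩
  obtain ⟨c, hc⟩ := hs (⟨x, hx⟩, ⟨y, hy⟩)
  let k := cantorSetHomeomorphNatToBool.symm c
  refine ⟨k, cantorSet_subset_unitInterval k.2, ?_⟩
  have h1 : G k = g k := by rw [← hG]; rfl
  have h2 : g k = (⟨x, hx⟩, ⟨y, hy⟩) := by
    rw [← hc]; simp [g, k]
  simp [h1, h2]

theorem peano_curve_prescribed_endpoints (a b : ℝ) (hab : a < b) (u v : ℝ × ℝ)
    (hu : u ∈ Set.Icc (0 : ℝ) 1 ×ˢ Set.Icc (0 : ℝ) 1)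
    (hv : v ∈ Set.Icc (0 : ℝ) 1 ×ˢ Set.Icc (0 : ℝ) 1) :
    ∃ Φ : Set.Icc a b → ℝ × ℝ, Continuous Φ ∧
      Set.range Φ = Set.Icc (0 : ℝ) 1 ×ˢ Set.Icc (0 : ℝ) 1 ∧
      Φ ⟨a, Set.left_mem_Icc.mpr hab.le⟩ = u ∧
      Φ ⟨b, Set.right_mem_Icc.mpr hab.le⟩ = v := by
  obtain ⟨G, hGc, hGm, hGs⟩ := peano_aux_s7
  have hconv : Convex ℝ (Set.Icc (0 : ℝ) 1 ×ˢ Set.Icc (0 : ℝ) 1) :=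
    (convex_Icc 0 1).prod (convex_Icc 0 1)
  have hba : 0 < b - a := sub_pos.mpr hab
  let H : ℝ → ℝ × ℝ := fun t => G (max 0 (min 1 t)) + (max 0 (-t)) • (u - G 0)
    + (max 0 (t - 1)) • (v - G 1)
  have hHc : Continuous H := by fun_prop
  have hL : ∀ t ≤ 0, H t = (1 - (-t)) • G 0 + (-t) • u := by
    intro t ht
    have e1 : max 0 (min 1 t) = 0 := by rw [min_eq_right (by linarith), max_eq_left ht]
    have e2 : max 0 (-t) = -t := max_eq_right (by linarith)
    have e3 : max 0 (t - 1) = 0 := max_eq_left (by linarith)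
    simp only [H, e1, e2, e3]
    module
  have hR : ∀ t, 1 ≤ t → H t = (1 - (t - 1)) • G 1 + (t - 1) • v := by
    intro t ht
    have e1 : max 0 (min 1 t) = 1 := by rw [min_eq_left ht, max_eq_right zero_le_one]
    have e2 : max 0 (-t) = 0 := max_eq_left (by linarith)
    have e3 : max 0 (t - 1) = t - 1 := max_eq_right (by linarith)
    simp only [H, e1, e2, e3]
    module
  have hM : ∀ t, 0 ≤ t → t ≤ 1 → H t = G t := by
    intro t h0 h1
    have e1 : max 0 (min 1 t) = t := by rw [min_eq_right h1, max_eq_right h0]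
    have e2 : max 0 (-t) = 0 := max_eq_left (by linarith)
    have e3 : max 0 (t - 1) = 0 := max_eq_left (by linarith)
    simp only [H, e1, e2, e3]
    module
  refine ⟨fun t => H (3 * ((t : ℝ) - a) / (b - a) - 1), by fun_prop, ?_, ?_, ?_⟩
  · apply Set.Subset.antisymm
    · rintro _ ⟨⟨t, hta, htb⟩, rfl⟩
      have l : -1 ≤ 3 * (t - a) / (b - a) - 1 := by
        have : 0 ≤ 3 * (t - a) / (b - a) := div_nonneg (by linarith) hba.le
        linarith
      have r : 3 * (t - a) / (b - a) - 1 ≤ 2 := by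
        have : 3 * (t - a) / (b - a) ≤ 3 := by
          rw [div_le_iff₀ hba]; linarith
        linarith
      dsimp only
      generalize 3 * (t - a) / (b - a) - 1 = s at l r
      rcases le_total s 0 with h | h
      · rw [hL s h]
        exact hconv (hGm 0) hu (by linarith) (by linarith) (by ring)
      rcases le_total s 1 with h' | h'
      · rw [hM s h h']; exact hGm s
      · rw [hR s h']
        exact hconv (hGm 1) hv (by linarith) (by linarith) (by ring)
    · intro p hp
      obtain ⟨s, ⟨h0, h1⟩, rfl⟩ := hGs p hp
      refine ⟨⟨a + (s + 1) / 3 * (b - a), ?_, ?_⟩, ?_⟩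
      · have : 0 ≤ (s + 1) / 3 * (b - a) := mul_nonneg (by linarith) hba.le
        linarith
      · nlinarith
      · dsimp only
        have : 3 * (a + (s + 1) / 3 * (b - a) - a) / (b - a) - 1 = s := by
          field_simp; ring
        rw [this, hM s h0 h1]
  · dsimp only
    rw [sub_self, mul_zero, zero_div, hL _ (by norm_num)]
    norm_num
  · dsimp only
    rw [mul_div_assoc, div_self hba.ne', hR _ (by norm_num)]
    norm_num
end

section
/- The family 𝒮ℱ of space-filling curves has empty interior in the Banach space C(I,ℝ²) with the supremum norm. -/
/-- A continuous map `φ : I → ℝ²` is a space-filling curve if its image is Jordan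
measurable with positive Jordan content; equivalently, the Lebesgue measure of the
topological boundary of its image is zero and the interior of its image is nonempty. -/
def SpaceFilling : Set C(unitInterval, ℝ × ℝ) :=
  {φ | MeasureTheory.volume (frontier (Set.range ⇑φ)) = 0 ∧
       (interior (Set.range ⇑φ)).Nonempty}

theorem spaceFilling_empty_interior : interior SpaceFilling = ∅ := by
  rw [Set.eq_empty_iff_forall_notMem]
  intro φ hφ
  rw [mem_interior_iff_mem_nhds, Metric.mem_nhds_iff] at hφ
  obtain ⟨ε, hε, hsub⟩ := hφ
  obtain ⟨p, hp⟩ := exists_polynomial_near_continuousMap 0 1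
    (⟨fun t => (φ t).1, by fun_prop⟩ : C(Set.Icc (0 : ℝ) 1, ℝ)) ε hε
  obtain ⟨q, hq⟩ := exists_polynomial_near_continuousMap 0 1
    (⟨fun t => (φ t).2, by fun_prop⟩ : C(Set.Icc (0 : ℝ) 1, ℝ)) ε hε
  let ψ : C(unitInterval, ℝ × ℝ) :=
    ⟨fun t => (p.eval (t : ℝ), q.eval (t : ℝ)), by fun_prop⟩
  have hψ : ψ ∈ Metric.ball φ ε := by
    rw [Metric.mem_ball, ContinuousMap.dist_lt_iff hε]
    intro t
    have h1 := (ContinuousMap.norm_lt_iff _ hε).1 hp t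
    have h2 := (ContinuousMap.norm_lt_iff _ hε).1 hq t
    rw [Prod.dist_eq, max_lt_iff]
    exact ⟨by simpa [ψ, Real.dist_eq] using h1, by simpa [ψ, Real.dist_eq] using h2⟩
  obtain ⟨-, hne⟩ := hsub hψ
  have hd : Dense (Set.range (fun t : ℝ => (p.eval t, q.eval t)))ᶜ := by
    apply ContDiff.dense_compl_range_of_finrank_lt_finrank
    · exact ContDiff.prodMk (by simpa using p.contDiff_aeval (𝕜 := ℝ) 1)
        (by simpa using q.contDiff_aeval (𝕜 := ℝ) 1)
    · simp
  have he := interior_eq_empty_iff_dense_compl.2 hd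
  have hr : Set.range ψ ⊆ Set.range (fun t : ℝ => (p.eval t, q.eval t)) := by
    rintro _ ⟨t, rfl⟩
    exact ⟨t, rfl⟩
  obtain ⟨x, hx⟩ := hne
  have := interior_mono hr hx
  rw [he] at this
  exact this
end

section
/- The family 𝒮ℱ of space-filling curves is spaceable in C(I,ℝ²): there exists a closed, infinite-dimensional linear subspace M of the Banach space C(I,ℝ²) such that every nonzero element of M is a space-filling curve. -/
theorem exists_peano_cube :
    ∃ γ : C(unitInterval, unitInterval × unitInterval × unitInterval), Function.Surjective γ := by
  obtain ⟨f, hf, hfs⟩ := exists_nat_bool_continuous_surjective_of_compact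
    (unitInterval × unitInterval × unitInterval)
  have hI : TietzeExtension.{0} unitInterval :=
    .of_retract ⟨((↑) : unitInterval → ℝ), by fun_prop⟩
      ⟨Set.projIcc (0 : ℝ) 1 zero_le_one, continuous_projIcc⟩ (by ext x; simp)
  let e : (ℕ → Bool) → unitInterval := fun x =>
    ⟨(cantorSetHomeomorphNatToBool.symm x : ℝ),
      cantorSet_subset_unitInterval (cantorSetHomeomorphNatToBool.symm x).2⟩
  have hec : Continuous e := by
    apply Continuous.subtype_mk
    exact continuous_subtype_val.comp cantorSetHomeomorphNatToBool.symm.continuous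
  have hei : Function.Injective e := by
    intro x y hxy
    apply cantorSetHomeomorphNatToBool.symm.injective
    apply Subtype.ext
    have h2 : (e x : ℝ) = e y := by rw [hxy]
    exact h2
  obtain ⟨g, hg⟩ := ContinuousMap.exists_extension (hec.isClosedEmbedding hei) ⟨f, hf⟩
  refine ⟨g, fun y => ?_⟩
  obtain ⟨x, rfl⟩ := hfs y
  exact ⟨e x, DFunLike.congr_fun hg x⟩

theorem not_finiteDimensional_C : ¬ FiniteDimensional ℝ C(unitInterval, ℝ) := by
  intro h
  have hinj : Function.Injective
      (Polynomial.toContinuousMapOnAlgHom (R := ℝ) unitInterval).toLinearMap := by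
    rw [← LinearMap.ker_eq_bot, LinearMap.ker_eq_bot']
    intro p hp
    apply Polynomial.eq_zero_of_infinite_isRoot
    apply (Set.Icc_infinite (zero_lt_one (α := ℝ))).mono
    intro x hx
    exact DFunLike.congr_fun hp (⟨x, hx⟩ : unitInterval)
  have := FiniteDimensional.of_injective _ hinj
  exact Polynomial.not_finite (R := ℝ) this

/-- The multiplication operator `a ↦ (a ∘ u) • q`. -/
noncomputable def curveOp (u : C(unitInterval, unitInterval)) (q : C(unitInterval, ℝ × ℝ)) :
    C(unitInterval, ℝ) →ₗ[ℝ] C(unitInterval, ℝ × ℝ) where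
  toFun a := ⟨fun t => a (u t) • q t, by fun_prop⟩
  map_add' a b := by ext t <;> simp [add_mul]
  map_smul' c a := by ext t <;> simp [mul_assoc]

theorem exists_param : ∃ (u : C(unitInterval, unitInterval)) (q : C(unitInterval, ℝ × ℝ)),
    (∀ t, ‖q t‖ ≤ 1) ∧ ∀ (s : unitInterval) (p : ℝ × ℝ), ‖p‖ ≤ 1 → ∃ t, u t = s ∧ q t = p := by
  obtain ⟨γ, hγ⟩ := exists_peano_cube
  refine ⟨⟨fun t => (γ t).1, by fun_prop⟩,
    ⟨fun t => (2 * ((γ t).2.1 : ℝ) - 1, 2 * ((γ t).2.2 : ℝ) - 1), by fun_prop⟩, ?_, ?_⟩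
  · intro t
    have h1 := (γ t).2.1.2
    have h2 := (γ t).2.2.2
    simp only [Set.mem_Icc] at h1 h2
    simp only [ContinuousMap.coe_mk, Prod.norm_def, Real.norm_eq_abs, sup_le_iff, abs_le]
    refine ⟨⟨?_, ?_⟩, ?_, ?_⟩ <;> linarith
  · rintro s ⟨x, y⟩ hp
    simp only [Prod.norm_def, Real.norm_eq_abs, sup_le_iff, abs_le] at hp
    obtain ⟨⟨h1, h2⟩, h3, h4⟩ := hp
    obtain ⟨t, ht⟩ := hγ (s, ⟨(x + 1) / 2, by constructor <;> linarith⟩,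
      ⟨(y + 1) / 2, by constructor <;> linarith⟩)
    refine ⟨t, by simp [ht], ?_⟩
    simp only [ContinuousMap.coe_mk, ht, Prod.mk.injEq]
    constructor <;> ring

theorem range_curveOp (u : C(unitInterval, unitInterval)) (q : C(unitInterval, ℝ × ℝ))
    (hq : ∀ t, ‖q t‖ ≤ 1)
    (hs : ∀ (s : unitInterval) (p : ℝ × ℝ), ‖p‖ ≤ 1 → ∃ t, u t = s ∧ q t = p)
    (a : C(unitInterval, ℝ)) :
    Set.range (curveOp u q a) = Metric.closedBall 0 ‖a‖ := by
  ext p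
  simp only [Set.mem_range, mem_closedBall_zero_iff]
  constructor
  · rintro ⟨t, rfl⟩
    change ‖a (u t) • q t‖ ≤ _
    rw [norm_smul]
    exact (mul_le_of_le_one_right (norm_nonneg _) (hq t)).trans (a.norm_coe_le_norm _)
  · intro hp
    obtain ⟨s, -, hsm⟩ := isCompact_univ.exists_isMaxOn Set.univ_nonempty
      (f := fun s : unitInterval => ‖a s‖) (by fun_prop)
    have hmax : ‖a‖ ≤ ‖a s‖ :=
      (ContinuousMap.norm_le _ (norm_nonneg _)).2 fun x => hsm (Set.mem_univ x)
    by_cases h0 : a s = 0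
    · obtain ⟨t, ht, -⟩ := hs s 0 (by simp)
      refine ⟨t, ?_⟩
      change a (u t) • q t = p
      have : p = 0 := by
        rw [← norm_le_zero_iff]
        simpa [h0] using hp.trans hmax
      rw [ht, h0, this, zero_smul]
    · obtain ⟨t, ht, hqt⟩ := hs s ((a s)⁻¹ • p) (by
        rw [norm_smul, norm_inv, inv_mul_le_iff₀ (norm_pos_iff.2 h0), mul_one]
        exact hp.trans hmax)
      refine ⟨t, ?_⟩
      change a (u t) • q t = p
      rw [ht, hqt, smul_inv_smul₀ h0]

theorem norm_curveOp (u : C(unitInterval, unitInterval)) (q : C(unitInterval, ℝ × ℝ))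
    (hq : ∀ t, ‖q t‖ ≤ 1)
    (hs : ∀ (s : unitInterval) (p : ℝ × ℝ), ‖p‖ ≤ 1 → ∃ t, u t = s ∧ q t = p)
    (a : C(unitInterval, ℝ)) : ‖curveOp u q a‖ = ‖a‖ := by
  have hr := range_curveOp u q hq hs a
  apply le_antisymm
  · refine (ContinuousMap.norm_le _ (norm_nonneg _)).2 fun t => ?_
    have : curveOp u q a t ∈ Metric.closedBall (0 : ℝ × ℝ) ‖a‖ := hr ▸ Set.mem_range_self t
    simpa using this
  · have : ((‖a‖, 0) : ℝ × ℝ) ∈ Set.range (curveOp u q a) := by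
      rw [hr]; simp [Prod.norm_def]
    obtain ⟨t, ht⟩ := this
    have h := (curveOp u q a).norm_coe_le_norm t
    rw [ht] at h
    simpa [Prod.norm_def] using h

theorem spaceFilling_spaceable :
    ∃ M : Submodule ℝ C(unitInterval, ℝ × ℝ),
      IsClosed (M : Set C(unitInterval, ℝ × ℝ)) ∧
      ¬ FiniteDimensional ℝ M ∧
      ∀ f ∈ M, f ≠ 0 → f ∈ SpaceFilling := by
  obtain ⟨u, q, hq, hs⟩ := exists_param
  let T : C(unitInterval, ℝ) →ₗᵢ[ℝ] C(unitInterval, ℝ × ℝ) :=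
    ⟨curveOp u q, norm_curveOp u q hq hs⟩
  refine ⟨LinearMap.range T.toLinearMap, ?_, ?_, ?_⟩
  · have := T.isometry.isClosedEmbedding.isClosed_range
    exact this
  · intro h
    apply not_finiteDimensional_C
    exact (LinearEquiv.ofInjective T.toLinearMap T.injective).symm.finiteDimensional
  · rintro f ⟨a, rfl⟩ hf
    have ha : 0 < ‖a‖ := by
      rw [norm_pos_iff]
      rintro rfl
      exact hf (map_zero _)
    have hr : Set.range (T.toLinearMap a) = Metric.closedBall 0 ‖a‖ :=
      range_curveOp u q hq hs a
    refine ⟨?_, ?_⟩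
    · rw [hr, frontier_closedBall _ ha.ne']
      exact MeasureTheory.Measure.addHaar_sphere _ _ _
    · rw [hr, interior_closedBall _ ha.ne']
      exact ⟨0, Metric.mem_ball_self ha⟩
end

section
/- The family 𝒮ℱ of space-filling curves is maximal lineable in C(I,ℝ²): there exists a linear subspace M of C(I,ℝ²) whose dimension equals 𝔠, the cardinality of the continuum (which equals the dimension of C(I,ℝ²)), such that every nonzero element of M is a space-filling curve. -/
/-- Peano curve: a continuous surjection from the interval onto the square. -/
theorem exists_peano : ∃ x y : C(unitInterval, unitInterval),
    ∀ a b, ∃ t, x t = a ∧ y t = b := by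
  obtain ⟨f, hf, hs⟩ :=
    exists_nat_bool_continuous_surjective_of_compact (unitInterval × unitInterval)
  let c : C(cantorSet, ℝ × ℝ) :=
    ⟨fun p => (((f (cantorSetHomeomorphNatToBool p)).1 : ℝ),
      ((f (cantorSetHomeomorphNatToBool p)).2 : ℝ)), by fun_prop⟩
  obtain ⟨g, hg⟩ := ContinuousMap.exists_restrict_eq isClosed_cantorSet c
  refine ⟨⟨fun t => Set.projIcc 0 1 zero_le_one (g t).1, by fun_prop⟩,
    ⟨fun t => Set.projIcc 0 1 zero_le_one (g t).2, by fun_prop⟩, fun a b => ?_⟩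
  obtain ⟨u, hu⟩ := hs (a, b)
  have h := DFunLike.congr_fun hg (cantorSetHomeomorphNatToBool.symm u)
  simp only [ContinuousMap.restrict_apply, c, ContinuousMap.coe_mk,
    Homeomorph.apply_symm_apply, hu] at h
  refine ⟨⟨_, cantorSet_subset_unitInterval (cantorSetHomeomorphNatToBool.symm u).2⟩, ?_, ?_⟩
  · simp [h]
  · simp [h]

/-- Cardinality bound on the space of curves. -/
theorem card_curves_le : Cardinal.mk C(unitInterval, ℝ × ℝ) ≤ Cardinal.continuum := by
  have h : Function.Injective
      (fun (φ : C(unitInterval, ℝ × ℝ)) (n : ℕ) =>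
        φ (TopologicalSpace.denseSeq unitInterval n)) := by
    intro φ ψ h
    refine DFunLike.coe_injective (Continuous.ext_on
      (TopologicalSpace.denseRange_denseSeq unitInterval) φ.continuous ψ.continuous ?_)
    rintro _ ⟨n, rfl⟩
    exact congrFun h n
  refine (Cardinal.mk_le_of_injective h).trans ?_
  simp [Cardinal.mk_real]

/-- The power function with exponent `r` as a monoid homomorphism on `[0,1]`. -/
noncomputable def powHom (r : ℝ) : unitInterval →* ℝ where
  toFun t := (t : ℝ) ^ r
  map_one' := by simp
  map_mul' s t := by simpa using Real.mul_rpow s.2.1 t.2.1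

theorem powHom_injective : Function.Injective powHom := by
  intro r s h
  have h2 := DFunLike.congr_fun h (⟨1 / 2, by norm_num, by norm_num⟩ : unitInterval)
  have h3 : (1 / 2 : ℝ) ^ r = (1 / 2 : ℝ) ^ s := h2
  have h4 := congrArg Real.log h3
  rw [Real.log_rpow (by norm_num), Real.log_rpow (by norm_num)] at h4
  exact mul_right_cancel₀ (by norm_num) h4

/-- Power functions as continuous functions, for positive exponents. -/
noncomputable def powCont (r : Set.Ioi (0 : ℝ)) : C(unitInterval, ℝ) where
  toFun := powHom r
  continuous_toFun := by
    have h : (0 : ℝ) < r := r.2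
    exact (Real.continuous_rpow_const h.le).comp continuous_subtype_val

theorem linearIndependent_powCont : LinearIndependent ℝ powCont := by
  have h := (linearIndependent_monoidHom unitInterval ℝ).comp
    (fun r : Set.Ioi (0 : ℝ) => powHom r) (powHom_injective.comp Subtype.val_injective)
  exact LinearIndependent.of_comp (ContinuousMap.coeFnLinearMap ℝ (M := ℝ)) h

/-- The linear map sending `f` to the curve `t ↦ (f (x t), f (y t))`. -/
def liftCurve (x y : C(unitInterval, unitInterval)) :
    C(unitInterval, ℝ) →ₗ[ℝ] C(unitInterval, ℝ × ℝ) where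
  toFun f := (f.comp x).prodMk (f.comp y)
  map_add' f g := by ext <;> simp
  map_smul' c f := by ext <;> simp

/-- Curves of the form `liftCurve x y f` with `f 0 = 0`, `f ≠ 0` are space filling. -/
theorem liftCurve_spaceFilling (x y : C(unitInterval, unitInterval))
    (hxy : ∀ a b, ∃ t, x t = a ∧ y t = b) (f : C(unitInterval, ℝ)) (h0 : f 0 = 0)
    (hf : f ≠ 0) : liftCurve x y f ∈ SpaceFilling := by
  have hr : Set.range (liftCurve x y f) = Set.range f ×ˢ Set.range f := by
    ext ⟨p, q⟩
    constructor
    · rintro ⟨t, ht⟩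
      have h1 : f (x t) = p := congrArg Prod.fst ht
      have h2 : f (y t) = q := congrArg Prod.snd ht
      exact ⟨⟨_, h1⟩, ⟨_, h2⟩⟩
    · rintro ⟨⟨a, ha⟩, ⟨b, hb⟩⟩
      obtain ⟨t, h1, h2⟩ := hxy a b
      refine ⟨t, Prod.ext ?_ ?_⟩
      · change f (x t) = p
        rw [h1]; exact ha
      · change f (y t) = q
        rw [h2]; exact hb
  have hord : (Set.range f).OrdConnected := (isPreconnected_range f.continuous).ordConnected
  have hconv : Convex ℝ (Set.range f) := hord.convex
  constructor
  · rw [hr]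
    exact (hconv.prod hconv).addHaar_frontier _
  · rw [hr, interior_prod_eq]
    obtain ⟨t, ht⟩ := DFunLike.ne_iff.1 hf
    have ht' : f t ≠ 0 := ht
    have hi : (interior (Set.range f)).Nonempty := by
      rcases lt_or_gt_of_ne ht' with h | h
      · refine Set.Nonempty.mono (interior_mono (hord.out ⟨t, rfl⟩ ⟨0, h0⟩)) ?_
        rw [interior_Icc]
        exact Set.nonempty_Ioo.2 h
      · refine Set.Nonempty.mono (interior_mono (hord.out ⟨0, h0⟩ ⟨t, rfl⟩)) ?_
        rw [interior_Icc]
        exact Set.nonempty_Ioo.2 h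
    exact hi.prod hi

theorem spaceFilling_maximal_lineable :
    Module.rank ℝ C(unitInterval, ℝ × ℝ) = Cardinal.continuum ∧
    ∃ M : Submodule ℝ C(unitInterval, ℝ × ℝ),
      Module.rank ℝ M = Cardinal.continuum ∧
      ∀ f ∈ M, f ≠ 0 → f ∈ SpaceFilling := by
  obtain ⟨x, y, hxy⟩ := exists_peano
  have hinj : LinearMap.ker (liftCurve x y) = ⊥ := by
    rw [LinearMap.ker_eq_bot']
    intro f hf
    ext a
    obtain ⟨t, rfl, -⟩ := hxy a a
    exact congrArg Prod.fst (DFunLike.congr_fun hf t)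
  let K : Submodule ℝ C(unitInterval, ℝ) :=
    { carrier := {f | f 0 = 0}
      add_mem' := by
        intro f g hf hg
        simp_all
      zero_mem' := by simp
      smul_mem' := by
        intro c f hf
        simp_all }
  have hle : Module.rank ℝ C(unitInterval, ℝ × ℝ) ≤ Cardinal.continuum :=
    (rank_le_card ℝ _).trans card_curves_le
  have hMle := Submodule.rank_le (K.map (liftCurve x y))
  have hge : Cardinal.continuum ≤ Module.rank ℝ (K.map (liftCurve x y)) := by
    have hli := linearIndependent_powCont.map' _ hinj
    have hmem : ∀ r, (liftCurve x y ∘ powCont) r ∈ K.map (liftCurve x y) := by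
      intro r
      refine Submodule.mem_map_of_mem ?_
      have h : (0 : ℝ) < r := r.2
      exact Real.zero_rpow h.ne'
    have h2 : LinearIndependent ℝ
        (fun r => (⟨_, hmem r⟩ : K.map (liftCurve x y))) :=
      LinearIndependent.of_comp (Submodule.subtype _) hli
    have h3 := h2.cardinal_le_rank
    rwa [Cardinal.mk_Ioi_real] at h3
  refine ⟨le_antisymm hle (hge.trans hMle), K.map (liftCurve x y),
    le_antisymm (hMle.trans hle) hge, ?_⟩
  rintro _ ⟨f, hf, rfl⟩ hne
  refine liftCurve_spaceFilling x y hxy f hf ?_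
  rintro rfl
  simp at hne
end

section
/- The family 𝒮ℱ of space-filling curves is dense in the Banach space C(I,ℝ²) with the supremum norm. -/
theorem sf_peano : ∃ ψ : ℝ → ℝ × ℝ, Continuous ψ ∧ (∀ s, ψ s ∈ Set.Icc (0 : ℝ × ℝ) 1) ∧
    (∀ q ∈ Set.Icc (0 : ℝ × ℝ) 1, ∃ s ∈ Set.Icc (0 : ℝ) 1, ψ s = q) ∧ ∀ s, 2 ≤ s → ψ s = 0 := by
  obtain ⟨h, hc, hs⟩ :=
    exists_nat_bool_continuous_surjective_of_compact (unitInterval × unitInterval)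
  let f : C(cantorSet, unitInterval × unitInterval) :=
    ⟨fun x => h (cantorSetHomeomorphNatToBool x), hc.comp cantorSetHomeomorphNatToBool.continuous⟩
  obtain ⟨g, hg⟩ := ContinuousMap.exists_restrict_eq isClosed_cantorSet f
  have key : ∀ s : ℝ, 0 ≤ max 0 (min 1 (2 - s)) ∧ max 0 (min 1 (2 - s)) ≤ 1 := fun s =>
    ⟨le_max_left _ _, max_le zero_le_one (min_le_left _ _)⟩
  refine ⟨fun s => (max 0 (min 1 (2 - s)) * ((g s).1 : ℝ), max 0 (min 1 (2 - s)) * ((g s).2 : ℝ)),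
    by fun_prop, fun s => ?_, fun q hq => ?_, fun s h2 => ?_⟩
  · have h1 := (g s).1.2
    have h2 := (g s).2.2
    obtain ⟨k0, k1⟩ := key s
    refine ⟨⟨mul_nonneg k0 h1.1, mul_nonneg k0 h2.1⟩,
      ⟨mul_le_one₀ k1 h1.1 h1.2, mul_le_one₀ k1 h2.1 h2.2⟩⟩
  · obtain ⟨b, hb⟩ := hs (⟨q.1, hq.1.1, hq.2.1⟩, ⟨q.2, hq.1.2, hq.2.2⟩)
    obtain ⟨x, rfl⟩ := cantorSetHomeomorphNatToBool.surjective b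
    have hx := cantorSet_subset_unitInterval x.2
    refine ⟨x, hx, ?_⟩
    have e : g x = f x := by rw [← hg]; rfl
    have e2 : f x = h (cantorSetHomeomorphNatToBool x) := rfl
    have e3 : max (0 : ℝ) (min 1 (2 - x)) = 1 := by
      rw [min_eq_left (by linarith [hx.2]), max_eq_right zero_le_one]
    simp [e, e2, hb, e3]
  · have e3 : max (0 : ℝ) (min 1 (2 - s)) = 0 :=
      max_eq_left ((min_le_right _ _).trans (by linarith))
    simp [e3]

theorem sf_null (p : ℝ → ℝ × ℝ) (hp : ContDiff ℝ 1 p) :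
    MeasureTheory.volume (Set.range p) = 0 := by
  rw [← MeasureTheory.hausdorffMeasure_prod_real]
  have h : dimH (Set.range p) < ((2 : NNReal) : ENNReal) := by
    refine hp.dimH_range_le.trans_lt ?_
    simp
  exact hausdorffMeasure_of_dimH_lt (X := ℝ × ℝ) (d := 2) h

theorem spaceFilling_dense : Dense SpaceFilling := by
  rw [Metric.dense_iff]
  intro f ε hε
  obtain ⟨p1, hp1⟩ := exists_polynomial_near_continuousMap 0 1
    (⟨fun x => (f x).1, by fun_prop⟩ : C(Set.Icc (0:ℝ) 1, ℝ)) (ε / 4) (by positivity)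
  obtain ⟨p2, hp2⟩ := exists_polynomial_near_continuousMap 0 1
    (⟨fun x => (f x).2, by fun_prop⟩ : C(Set.Icc (0:ℝ) 1, ℝ)) (ε / 4) (by positivity)
  let p : ℝ → ℝ × ℝ := fun x => (p1.eval x, p2.eval x)
  have hpd : ContDiff ℝ 1 p := by
    have h (q : Polynomial ℝ) : ContDiff ℝ 1 (fun x => q.eval x) := by
      simpa using q.contDiff_aeval (𝕜 := ℝ) 1
    exact (h p1).prodMk (h p2)
  have hpc : Continuous p := hpd.continuous
  have hpf : ∀ t : unitInterval, dist (p t) (f t) ≤ ε / 4 := by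
    intro t
    rw [Prod.dist_eq]
    refine max_le ?_ ?_
    · exact ((ContinuousMap.norm_coe_le_norm _ t).trans hp1.le)
    · exact ((ContinuousMap.norm_coe_le_norm _ t).trans hp2.le)
  obtain ⟨r, hr, hr'⟩ := Metric.continuousAt_iff.1 (hpc.continuousAt (x := 0)) (ε / 8)
    (by positivity)
  obtain ⟨d, hd0, hd⟩ := exists_between (lt_min hr one_pos)
  obtain ⟨hdr, hd1⟩ := lt_min_iff.1 hd
  obtain ⟨ψ, ψc, ψm, ψs, ψ0⟩ := sf_peano
  let g : C(unitInterval, ℝ × ℝ) :=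
    ⟨fun t => p (max t d) + (ε / 4) • ψ (2 * t / d), by fun_prop⟩
  let S : Set (ℝ × ℝ) := (fun q => p d + (ε / 4) • q) '' Set.Icc 0 1
  have hgS : Set.range g = S ∪ p '' Set.Icc d 1 := by
    ext z
    constructor
    · rintro ⟨t, rfl⟩
      rcases le_total (t : ℝ) d with h | h
      · left
        exact ⟨ψ (2 * t / d), ψm _, by simp [g, h]⟩
      · right
        refine ⟨t, ⟨h, t.2.2⟩, ?_⟩
        have : ψ (2 * t / d) = 0 := ψ0 _ (by rw [le_div_iff₀ hd0]; linarith)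
        simp [g, h, this]
    · rintro (⟨q, hq, rfl⟩ | ⟨t, ht, rfl⟩)
      · obtain ⟨s, hs, rfl⟩ := ψs q hq
        have h1 : s * d / 2 ≤ d := by nlinarith [hs.2]
        refine ⟨⟨s * d / 2, by have := hs.1; positivity, by linarith⟩, ?_⟩
        have : 2 * (s * d / 2) / d = s := by field_simp
        simp [g, h1, this]
      · refine ⟨⟨t, by linarith [ht.1], ht.2⟩, ?_⟩
        have : ψ (2 * t / d) = 0 := ψ0 _ (by rw [le_div_iff₀ hd0]; linarith [ht.1])
        simp [g, ht.1, this]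
  refine ⟨g, ?_, ?_, ?_⟩
  · rw [Metric.mem_ball]
    refine lt_of_le_of_lt ((ContinuousMap.dist_le (C := 3 * ε / 4) (by positivity)).2 ?_)
      (by linarith)
    intro t
    have h1 : dist (g t) (p (max t d)) ≤ ε / 4 := by
      have : ‖ψ (2 * t / d)‖ ≤ 1 := by
        have := ψm (2 * t / d)
        rw [Prod.norm_def]
        refine max_le ?_ ?_
        · rw [Real.norm_of_nonneg this.1.1]; exact this.2.1
        · rw [Real.norm_of_nonneg this.1.2]; exact this.2.2
      rw [dist_eq_norm]
      simp only [g, ContinuousMap.coe_mk, add_sub_cancel_left, norm_smul,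
        Real.norm_of_nonneg (show 0 ≤ ε / 4 by positivity)]
      nlinarith
    have h2 : dist (p (max t d)) (p t) ≤ ε / 4 := by
      rcases le_total (t : ℝ) d with h | h
      · rw [max_eq_right h]
        have a := hr' (x := d) (by rw [Real.dist_0_eq_abs, abs_of_pos hd0]; exact hdr)
        have b := hr' (x := t) (by rw [Real.dist_0_eq_abs, abs_of_nonneg t.2.1]; linarith)
        linarith [dist_triangle_right (p d) (p t) (p 0)]
      · rw [max_eq_left h, dist_self]; positivity
    linarith [dist_triangle4 (g t) (p (max t d)) (p t) (f t), hpf t]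
  · rw [hgS]
    have hS : Convex ℝ S := by
      have := ((convex_Icc (0 : ℝ × ℝ) 1).smul (ε / 4)).translate (p d)
      simpa [S, ← Set.image_smul, Set.image_image] using this
    have hB : IsClosed (p '' Set.Icc d 1) := (isCompact_Icc.image hpc).isClosed
    refine MeasureTheory.measure_mono_null (t := frontier S ∪ Set.range p) ?_ ?_
    · refine (frontier_union_subset _ _).trans (Set.union_subset_union Set.inter_subset_left ?_)
      exact Set.inter_subset_right.trans (hB.frontier_subset.trans (Set.image_subset_range _ _))
    · exact MeasureTheory.measure_union_null (hS.addHaar_frontier _) (sf_null p hpd)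
  · rw [hgS]
    refine Set.Nonempty.mono (interior_mono Set.subset_union_left) ?_
    have hne : ε / 4 ≠ 0 := by positivity
    let e : (ℝ × ℝ) ≃ₜ (ℝ × ℝ) := (Homeomorph.smulOfNeZero (ε / 4) hne).trans
      (Homeomorph.addLeft (p d))
    have he : S = e '' Set.Icc 0 1 := rfl
    rw [he, ← e.image_interior]
    refine Set.Nonempty.image _ ?_
    have : Set.Icc (0 : ℝ × ℝ) 1 = Set.Icc (0 : ℝ) 1 ×ˢ Set.Icc (0 : ℝ) 1 := by
      rw [Set.Icc_prod_Icc]; rfl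
    rw [this, interior_prod_eq, interior_Icc]
    exact ⟨(1 / 2, 1 / 2), by norm_num⟩
end

section
/- Let 𝒯𝒮ℱ₁ = {φ ∈ C(I,ℝ²) : for every neighborhood U of 1 in I, the interior of φ(U) in ℝ² is nonempty}. Then 𝒯𝒮ℱ₁ is spaceable in C(I,ℝ²): there exists a closed, infinite-dimensional linear subspace M of the Banach space C(I,ℝ²) such that every nonzero element of M belongs to 𝒯𝒮ℱ₁. -/
/-- The family of curves `φ` such that `φ(U)` has nonempty interior for every
neighborhood `U` of `1` in `I`. -/
def TSF1 : Set C(unitInterval, ℝ × ℝ) :=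
  {φ | ∀ U ∈ nhds (1 : unitInterval), (interior (⇑φ '' U)).Nonempty}

/-- A curve whose image (over `[0,1]`) covers the infinite product of unit squares. -/
lemma exists_cube_curve : ∃ G : ℝ → ℕ → ℝ × ℝ, Continuous G ∧ (∀ s n, ‖G s n‖ ≤ 1) ∧
    ∀ x : ℕ → ℝ × ℝ, (∀ n, ‖x n‖ ≤ 1) → ∃ s ∈ Set.Icc (0 : ℝ) 1, G s = x := by
  let B := Metric.closedBall (0 : ℝ × ℝ) 1
  have : CompactSpace B := isCompact_iff_compactSpace.mp (isCompact_closedBall _ _)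
  have : Nonempty B := ⟨⟨0, by simp [B]⟩⟩
  have : TietzeExtension.{0, 0} B := Metric.instTietzeExtensionClosedBall ℝ 0 one_pos
  let : MetricSpace (ℕ → B) := TopologicalSpace.metrizableSpaceMetric _
  obtain ⟨f, hf, hfs⟩ := exists_nat_bool_continuous_surjective_of_compact (ℕ → B)
  let f' : C(cantorSet, ℕ → B) :=
    ⟨fun c => f (cantorSetHomeomorphNatToBool c), hf.comp cantorSetHomeomorphNatToBool.continuous⟩
  obtain ⟨g, hg⟩ := ContinuousMap.exists_restrict_eq isClosed_cantorSet f'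
  refine ⟨fun s n => (g s n : ℝ × ℝ), ?_, ?_, ?_⟩
  · fun_prop
  · intro s n
    exact mem_closedBall_zero_iff.mp (g s n).2
  · intro x hx
    obtain ⟨b, hb⟩ := hfs (fun n => ⟨x n, by simpa [B] using hx n⟩)
    refine ⟨(cantorSetHomeomorphNatToBool.symm b : cantorSet),
      cantorSet_subset_unitInterval (Subtype.coe_prop _), ?_⟩
    have h := DFunLike.congr_fun hg (cantorSetHomeomorphNatToBool.symm b)
    simp only [ContinuousMap.restrict_apply] at h
    funext n
    beta_reduce
    rw [h]
    simp [f', hb]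

/-- The trapezoidal bump. -/
noncomputable def bump (s : ℝ) : ℝ := max 0 (min 1 (min (3 * s) (3 - 3 * s)))

lemma bump_nonneg (s : ℝ) : 0 ≤ bump s := le_max_left _ _
lemma bump_le (s : ℝ) : bump s ≤ 1 := max_le zero_le_one (min_le_left _ _)
lemma bump_cont : Continuous bump := by unfold bump; fun_prop
lemma bump_one {s : ℝ} (h : 1 / 3 ≤ s) (h' : s ≤ 2 / 3) : bump s = 1 := by
  unfold bump
  rw [min_eq_left (le_min (by linarith) (by linarith))]
  simp
lemma bump_of_le {s : ℝ} (h : s ≤ 0) : bump s = 0 := by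
  unfold bump
  apply max_eq_left
  exact (min_le_right _ _).trans ((min_le_left _ _).trans (by linarith))
lemma bump_of_ge {s : ℝ} (h : 1 ≤ s) : bump s = 0 := by
  unfold bump
  apply max_eq_left
  exact (min_le_right _ _).trans ((min_le_right _ _).trans (by linarith))

lemma exists_gamma : ∃ γ : ℕ → C(unitInterval, ℝ × ℝ), (∀ n, ‖γ n‖ ≤ 2) ∧
    ∀ (m : ℕ) (x : ℕ → ℝ × ℝ), (∀ n, ‖x n‖ ≤ 1) →
      ∃ t : unitInterval, 1 - (t : ℝ) ≤ (1 / 2) ^ m ∧ ∀ n, γ n t = (1 / 2 : ℝ) ^ m • x n := by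
  obtain ⟨G, hG, hG1, hGs⟩ := exists_cube_curve
  let α : ℕ → ℝ → ℝ := fun m t => 2 - 2 ^ (m + 1) * (1 - t)
  let F : ℕ → ℕ → ℝ → ℝ × ℝ := fun n m t =>
    ((1 / 2 : ℝ) ^ m * bump (α m t)) • G (3 * α m t - 1) n
  have hFc : ∀ n m, Continuous (F n m) := by
    intro n m
    have h1 : Continuous (α m) := by fun_prop
    have h2 : Continuous fun s => G s n := (continuous_apply n).comp hG
    exact (continuous_const.mul (bump_cont.comp h1)).smul
      (h2.comp ((continuous_const.mul h1).sub continuous_const))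
  have hFb : ∀ n m t, ‖F n m t‖ ≤ (1 / 2 : ℝ) ^ m := by
    intro n m t
    simp only [F]
    rw [norm_smul, Real.norm_eq_abs, abs_of_nonneg (mul_nonneg (by positivity) (bump_nonneg _))]
    calc _ ≤ ((1 / 2 : ℝ) ^ m * 1) * 1 := by
          gcongr
          · exact bump_le _
          · exact hG1 _ _
      _ = _ := by ring
  have hs : Summable fun m : ℕ => (1 / 2 : ℝ) ^ m := summable_geometric_two
  refine ⟨fun n => ⟨fun t => ∑' m, F n m t,
    (continuous_tsum (hFc n) hs (hFb n)).comp continuous_subtype_val⟩, ?_, ?_⟩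
  · intro n
    rw [ContinuousMap.norm_le _ (by norm_num)]
    intro t
    have := tsum_of_norm_bounded hs.hasSum (fun m => hFb n m t)
    rwa [tsum_geometric_two] at this
  · intro m x hx
    obtain ⟨s, ⟨hs0, hs1⟩, hsx⟩ := hGs x hx
    -- choose `t` with `α m t = (s + 1) / 3`
    let u : ℝ := (5 - s) / 3 * (1 / 2) ^ (m + 1)
    have hp : (0 : ℝ) < (1 / 2) ^ (m + 1) := by positivity
    have hp1 : (1 / 2 : ℝ) ^ m ≤ 1 := pow_le_one₀ (by norm_num) (by norm_num)
    have hpm : (1 / 2 : ℝ) ^ m = 2 * (1 / 2) ^ (m + 1) := by rw [pow_succ]; ring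
    have hu0 : 0 ≤ u := by
      apply mul_nonneg _ hp.le
      linarith
    have hum : u ≤ (1 / 2) ^ m := by
      rw [hpm]
      apply mul_le_mul_of_nonneg_right _ hp.le
      linarith
    have hmul : (2 : ℝ) ^ (m + 1) * u = (5 - s) / 3 := by
      have : (2 : ℝ) ^ (m + 1) * (1 / 2) ^ (m + 1) = 1 := by rw [← mul_pow]; norm_num
      simp only [u]
      linear_combination (5 - s) / 3 * this
    refine ⟨⟨1 - u, by linarith, by linarith⟩, by simpa using hum, ?_⟩
    intro n
    have hαm : α m (1 - u) = (s + 1) / 3 := by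
      simp only [α, sub_sub_cancel, hmul]; ring
    have hz : ∀ k, k ≠ m → F n k (1 - u) = 0 := by
      intro k hk
      have hb : bump (α k (1 - u)) = 0 := by
        rcases lt_or_gt_of_ne hk with h | h
        · apply bump_of_ge
          simp only [α, sub_sub_cancel]
          have h2 : (2 : ℝ) ^ (k + 1 + 1) ≤ 2 ^ (m + 1) :=
            pow_le_pow_right₀ (by norm_num) (by omega)
          have := mul_le_mul_of_nonneg_right h2 hu0
          rw [hmul, pow_succ _ (k + 1)] at this
          linarith
        · apply bump_of_le
          simp only [α, sub_sub_cancel]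
          have h2 : (2 : ℝ) ^ (m + 1 + 1) ≤ 2 ^ (k + 1) :=
            pow_le_pow_right₀ (by norm_num) (by omega)
          have := mul_le_mul_of_nonneg_right h2 hu0
          rw [pow_succ _ (m + 1)] at this
          linarith
      simp [F, hb]
    change ∑' k, F n k (1 - u) = _
    rw [tsum_eq_single m hz]
    simp only [F]
    rw [hαm, bump_one (by linarith) (by linarith), show 3 * ((s + 1) / 3) - 1 = s by ring, hsx,
      mul_one]

theorem TSF1_spaceable :
    ∃ M : Submodule ℝ C(unitInterval, ℝ × ℝ),
      IsClosed (M : Set C(unitInterval, ℝ × ℝ)) ∧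
      ¬ FiniteDimensional ℝ M ∧
      ∀ f ∈ M, f ≠ 0 → f ∈ TSF1 := by
  obtain ⟨γ, hγ, hγs⟩ := exists_gamma
  let X := lp (fun _ : ℕ => ℝ) 1
  have hXs : ∀ a : X, Summable fun n => ‖a n‖ := fun a => by
    have := (lp.memℓp a).summable (by simp)
    simpa using this
  have hXn : ∀ a : X, ‖a‖ = ∑' n, ‖a n‖ := fun a => by
    rw [lp.norm_eq_tsum_rpow (by simp)]; simp
  have hb : ∀ (a : X) n, ‖a n • γ n‖ ≤ ‖a n‖ * 2 := fun a n => by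
    rw [norm_smul]
    exact mul_le_mul_of_nonneg_left (hγ n) (norm_nonneg _)
  have hS : ∀ a : X, Summable fun n => a n • γ n := fun a =>
    Summable.of_norm_bounded ((hXs a).mul_right 2) (hb a)
  let T₀ : X →ₗ[ℝ] C(unitInterval, ℝ × ℝ) :=
    { toFun := fun a => ∑' n, a n • γ n
      map_add' := fun a b => by
        rw [← (hS a).tsum_add (hS b)]
        simp [add_smul]
      map_smul' := fun c a => by
        rw [RingHom.id_apply, ← (hS a).tsum_const_smul]
        exact tsum_congr fun n => mul_smul c (a n) (γ n) }
  let T : X →L[ℝ] C(unitInterval, ℝ × ℝ) := T₀.mkContinuous 2 (fun a => by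
    have := tsum_of_norm_bounded ((hXs a).mul_right 2).hasSum (hb a)
    rw [tsum_mul_right, ← hXn, mul_comm] at this
    exact this)
  have hT : ∀ a t, T a t = ∑' n, a n • γ n t := fun a t => by
    change (∑' n, a n • γ n) t = _
    exact (ContinuousMap.tsum_apply (hS a) t).symm
  have hlow : ∀ a, ‖a‖ ≤ (1 : NNReal) * ‖T a‖ := fun a => by
    obtain ⟨t, -, ht⟩ := hγs 0 (fun n => ((SignType.sign (a n) : ℝ), 0)) (fun n => by
      rcases lt_trichotomy (a n) 0 with h | h | h <;> simp [h, Prod.norm_def])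
    have h1 : T a t = (‖a‖, 0) := by
      rw [hT, hXn]
      have h2 : HasSum (fun n => ((‖a n‖, 0) : ℝ × ℝ)) (∑' n, ‖a n‖, 0) :=
        (hXs a).hasSum.prodMk hasSum_zero
      rw [← h2.tsum_eq]
      congr 1
      funext n
      rw [ht n]
      simp [Real.norm_eq_abs]
    have h3 := (T a).norm_coe_le_norm t
    rw [h1, Prod.norm_def] at h3
    have h4 := (le_abs_self ‖a‖).trans ((le_max_left _ _).trans h3)
    simpa using h4
  have hanti := T.antilipschitz_of_bound hlow
  refine ⟨LinearMap.range (T : X →ₗ[ℝ] C(unitInterval, ℝ × ℝ)), ?_, ?_, ?_⟩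
  · have := hanti.isClosed_range T.uniformContinuous
    rw [LinearMap.coe_range]
    exact this
  · intro hfin
    have e := LinearEquiv.ofInjective (T : X →ₗ[ℝ] C(unitInterval, ℝ × ℝ)) hanti.injective
    have : FiniteDimensional ℝ X := e.symm.finiteDimensional
    have hli : LinearIndependent ℝ (fun n : ℕ => (lp.single 1 n (1 : ℝ) : X)) := by
      rw [linearIndependent_iff']
      intro s g hg i hi
      let ev : X →ₗ[ℝ] ℝ :=
        { toFun := fun a => a i, map_add' := fun _ _ => rfl, map_smul' := fun _ _ => rfl }
      have hev : ∀ j, ev (lp.single 1 j (1 : ℝ) : X) = if i = j then 1 else 0 := fun j =>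
        Pi.single_apply j (1 : ℝ) i
      have h := congrArg ev hg
      rw [map_sum] at h
      simpa [hev, hi] using h
    exact not_finite_iff_infinite.mpr inferInstance hli.finite
  · rintro _ ⟨a, rfl⟩ hne U hU
    have hn : ∃ n, a n ≠ 0 := by
      by_contra! h
      apply hne
      have : a = 0 := lp.ext (funext h)
      simp [this]
    obtain ⟨n₀, hn₀⟩ := hn
    obtain ⟨ε, hε, hεU⟩ := Metric.mem_nhds_iff.mp hU
    obtain ⟨m, hm⟩ := exists_pow_lt_of_lt_one hε (show (1 / 2 : ℝ) < 1 by norm_num)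
    have hr : 0 < |a n₀| * (1 / 2 : ℝ) ^ m := by positivity
    have hsub : Metric.ball (0 : ℝ × ℝ) (|a n₀| * (1 / 2) ^ m) ⊆ (T a) '' U := by
      intro y hy
      rw [mem_ball_zero_iff] at hy
      obtain ⟨t, htm, ht⟩ := hγs m
        (Pi.single n₀ ((a n₀ * (1 / 2) ^ m)⁻¹ • y)) (fun n => by
          by_cases h : n = n₀
          · subst h
            rw [Pi.single_eq_same, norm_smul, norm_inv, norm_mul, Real.norm_eq_abs,
              Real.norm_eq_abs, abs_of_pos (show (0 : ℝ) < (1 / 2) ^ m by positivity),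
              inv_mul_le_iff₀ hr]
            linarith
          · simp [Pi.single_eq_of_ne h])
      refine ⟨t, hεU ?_, ?_⟩
      · rw [Metric.mem_ball, Subtype.dist_eq, Real.dist_eq, abs_sub_comm]
        rw [abs_of_nonneg (by simpa using t.2.2)]
        simpa using htm.trans_lt hm
      · rw [hT, tsum_eq_single n₀]
        · rw [ht, Pi.single_eq_same, smul_smul, smul_smul, mul_inv_cancel₀, one_smul]
          positivity
        · intro n h
          rw [ht, Pi.single_eq_of_ne h]
          simp
    exact ⟨0, mem_interior.mpr ⟨_, hsub, Metric.isOpen_ball, Metric.mem_ball_self hr⟩⟩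
end

section
/- The family λ-𝒮ℱ of λ-space-filling curves is maximal dense-lineable in C(I,ℝ²): there exists a dense linear subspace M of the Banach space C(I,ℝ²) with dimension 𝔠, the cardinality of the continuum, such that every nonzero element of M belongs to λ-𝒮ℱ. -/
/-- A continuous map `φ : I → ℝ²` is a λ-space-filling curve if the two-dimensional
Lebesgue measure of its image is strictly positive. -/
def LambdaSpaceFilling : Set C(unitInterval, ℝ × ℝ) :=
  {φ | 0 < MeasureTheory.volume (Set.range ⇑φ)}

/-- A planar curve with a point all of whose neighbourhoods have images with interior points. -/
theorem aux_curve : ∃ (h : C(unitInterval, ℝ × ℝ)) (p : unitInterval),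
    ∀ U ∈ nhds p, (interior (h '' U)).Nonempty := by
  obtain ⟨φ, hφc, hφs⟩ := exists_nat_bool_continuous_surjective_of_compact
    (unitInterval × unitInterval)
  let ψ : C(cantorSet, ℝ × ℝ) :=
    ⟨fun t => (((φ (cantorSetHomeomorphNatToBool t)).1 : ℝ),
      ((φ (cantorSetHomeomorphNatToBool t)).2 : ℝ)), by
      have := cantorSetHomeomorphNatToBool.continuous
      fun_prop⟩
  obtain ⟨H, hH⟩ := ψ.exists_restrict_eq isClosed_cantorSet
  let h : C(unitInterval, ℝ × ℝ) := H.comp ⟨Subtype.val, continuous_subtype_val⟩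
  have hrange : Set.Icc (0 : ℝ) 1 ×ˢ Set.Icc (0 : ℝ) 1 ⊆ h '' Set.univ := by
    rintro ⟨a, b⟩ ⟨ha, hb⟩
    obtain ⟨w, hw⟩ := hφs (⟨a, ha⟩, ⟨b, hb⟩)
    let t := cantorSetHomeomorphNatToBool.symm w
    refine ⟨⟨t.1, cantorSet_subset_unitInterval t.2⟩, trivial, ?_⟩
    have h1 : H t.1 = ψ t := by
      rw [← hH]; rfl
    change H t.1 = _
    rw [h1]
    simp [ψ, t, hw]
  refine ⟨h, ?_⟩
  have key : ∃ p : unitInterval, ∀ U ∈ nhds p, ¬ IsMeagre (h '' U) := by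
    by_contra! hcon
    have hm : IsMeagre (h '' Set.univ) := by
      refine isCompact_univ.induction_on (p := fun s => IsMeagre (h '' s)) ?_ ?_ ?_ ?_
      · simpa using IsMeagre.empty
      · intro s t hst ht
        exact ht.mono (Set.image_mono hst)
      · intro s t hs ht
        rw [Set.image_union]
        exact hs.union ht
      · intro x _
        obtain ⟨U, hU, hU'⟩ := hcon x
        exact ⟨U, mem_nhdsWithin_of_mem_nhds hU, hU'⟩
    have h2 : IsMeagre (Set.Ioo (0 : ℝ) 1 ×ˢ Set.Ioo (0 : ℝ) 1) :=
      hm.mono ((Set.prod_mono Set.Ioo_subset_Icc_self Set.Ioo_subset_Icc_self).trans hrange)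
    exact not_isMeagre_of_isOpen (isOpen_Ioo.prod isOpen_Ioo)
      ⟨((1/2 : ℝ), (1/2 : ℝ)), by constructor <;> constructor <;> norm_num⟩ h2
  obtain ⟨p, hp⟩ := key
  refine ⟨p, fun U hU => ?_⟩
  obtain ⟨K, hK, hKU, hKc⟩ := LocallyCompactSpace.local_compact_nhds p U hU
  by_contra hne
  have hcl : IsClosed (h '' K) := (hKc.image h.continuous).isClosed
  have hint : interior (h '' K) = ∅ := by
    rw [Set.not_nonempty_iff_eq_empty] at hne
    exact Set.subset_empty_iff.1 (hne ▸ interior_mono (Set.image_mono hKU))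
  apply hp K hK
  apply IsNowhereDense.isMeagre
  rw [IsNowhereDense, hcl.closure_eq, hint]

/-- Exponential sums. -/
noncomputable def auxP (v : ℝ →₀ ℝ) (s : ℝ) : ℝ := v.sum fun r a => a * Real.exp (Real.exp r * s)

theorem auxP_analytic (v : ℝ →₀ ℝ) : AnalyticOnNhd ℝ (auxP v) Set.univ := by
  intro x _
  unfold auxP Finsupp.sum
  fun_prop

theorem auxP_not_const (v : ℝ →₀ ℝ) (c : ℝ) (h : ∀ s, auxP v s = c) : v = 0 := by
  let χ : ℝ → (Multiplicative ℝ →* ℝ) := fun e =>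
    { toFun := fun s => Real.exp (e * s.toAdd)
      map_one' := by simp
      map_mul' := by intro a b; simp [mul_add, Real.exp_add] }
  have hχ : Function.Injective χ := by
    intro e e' hee
    have := DFunLike.congr_fun hee (Multiplicative.ofAdd 1)
    simpa [χ] using this
  have hli : LinearIndependent ℝ (fun e => (χ e : Multiplicative ℝ → ℝ)) :=
    (linearIndependent_monoidHom (Multiplicative ℝ) ℝ).comp χ hχ
  have heq : Finsupp.mapDomain Real.exp v = Finsupp.single 0 c := by
    apply hli
    rw [Finsupp.linearCombination_mapDomain, Finsupp.linearCombination_single]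
    ext s
    have := h s.toAdd
    simp only [Finsupp.linearCombination_apply, Finsupp.sum, Finset.sum_apply, Pi.smul_apply,
      smul_eq_mul, Function.comp, χ, auxP] at this ⊢
    simpa using this
  ext r
  have := DFunLike.congr_fun heq (Real.exp r)
  rw [Finsupp.mapDomain_apply Real.exp_injective] at this
  rw [this, Finsupp.single_eq_of_ne (Real.exp_ne_zero r)]
  rfl

theorem auxP_image (v : ℝ →₀ ℝ) (hv : v ≠ 0) (A : Set ℝ) (hA : IsOpen A) (hc : IsPreconnected A)
    (hne : A.Nonempty) : 0 < MeasureTheory.volume (auxP v '' A) := by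
  have han := auxP_analytic v
  by_cases hs : (auxP v '' A).Subsingleton
  · exfalso
    obtain ⟨z, hz⟩ := hne
    apply hv
    apply auxP_not_const v (auxP v z)
    have := han.eq_of_eventuallyEq (g := fun _ => auxP v z) (fun x _ => analyticAt_const)
      (z₀ := z) (by
        filter_upwards [hA.mem_nhds hz] with y hy
        exact hs ⟨y, hy, rfl⟩ ⟨z, hz, rfl⟩)
    exact fun s => congrFun this s
  · rw [Set.not_subsingleton_iff] at hs
    obtain ⟨a, ha, b, hb, hab⟩ := hs.exists_lt
    have hpre : IsPreconnected (auxP v '' A) :=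
      hc.image _ (fun x _ => (han x trivial).continuousAt.continuousWithinAt)
    refine lt_of_lt_of_le ?_ (MeasureTheory.measure_mono (hpre.Icc_subset ha hb))
    simpa using hab

/-- Image of a set with interior under `auxP v × auxP v`, translated. -/
theorem auxP_image2 (v : ℝ →₀ ℝ) (hv : v ≠ 0) (B : Set (ℝ × ℝ)) (hB : (interior B).Nonempty)
    (c : ℝ × ℝ) :
    0 < MeasureTheory.volume ((fun z : ℝ × ℝ => c + (auxP v z.1, auxP v z.2)) '' B) := by
  obtain ⟨z, hz⟩ := hB
  obtain ⟨ε, hε, hsub⟩ := Metric.mem_nhds_iff.1 (mem_interior_iff_mem_nhds.1 hz)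
  rw [← ball_prod_same] at hsub
  have hpos : ∀ x : ℝ, 0 < MeasureTheory.volume (auxP v '' Metric.ball x ε) := fun x =>
    auxP_image v hv _ Metric.isOpen_ball (convex_ball x ε).isPreconnected
      ⟨x, Metric.mem_ball_self hε⟩
  have h1 : (fun z : ℝ × ℝ => c + (auxP v z.1, auxP v z.2)) '' B
      = (fun z => c + z) '' ((fun z : ℝ × ℝ => (auxP v z.1, auxP v z.2)) '' B) := by
    rw [Set.image_image]
  rw [h1, Set.image_add_left, MeasureTheory.measure_preimage_add]
  have h2 : (auxP v '' Metric.ball z.1 ε) ×ˢ (auxP v '' Metric.ball z.2 ε)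
      ⊆ (fun z : ℝ × ℝ => (auxP v z.1, auxP v z.2)) '' B := by
    rintro ⟨_, _⟩ ⟨⟨x, hx, rfl⟩, ⟨y, hy, rfl⟩⟩
    exact ⟨(x, y), hsub ⟨hx, hy⟩, rfl⟩
  refine lt_of_lt_of_le ?_ (MeasureTheory.measure_mono h2)
  rw [MeasureTheory.Measure.volume_eq_prod, MeasureTheory.Measure.prod_prod]
  exact ENNReal.mul_pos (hpos _).ne' (hpos _).ne'

/-- Functions locally constant near `p`. -/
def auxD (p : unitInterval) : Submodule ℝ C(unitInterval, ℝ × ℝ) where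
  carrier := {f | ∀ᶠ t in nhds p, f t = f p}
  add_mem' := by
    intro f g hf hg
    filter_upwards [hf, hg] with t h1 h2
    simp [h1, h2]
  zero_mem' := by simp
  smul_mem' := by
    intro c f hf
    filter_upwards [hf] with t h1
    simp [h1]

theorem auxD_dense (p : unitInterval) : Dense (auxD p : Set C(unitInterval, ℝ × ℝ)) := by
  intro f
  rw [Metric.mem_closure_iff]
  intro ε hε
  let cl : ℝ → ℝ := fun x => max (-(ε/2)) (min (ε/2) x)
  have hcl : Continuous cl := by fun_prop
  have hbd : ∀ x, |cl x| ≤ ε/2 := by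
    intro x
    rw [abs_le]
    exact ⟨le_max_left _ _, max_le (by linarith) (min_le_left _ _)⟩
  have hid : ∀ x, |x| < ε/2 → cl x = x := by
    intro x hx
    rw [abs_lt] at hx
    simp only [cl]
    rw [min_eq_right hx.2.le, max_eq_right hx.1.le]
  let g : C(unitInterval, ℝ × ℝ) :=
    ⟨fun t => f t - (cl ((f t).1 - (f p).1), cl ((f t).2 - (f p).2)), by fun_prop⟩
  have hg0 : ∀ t, |(f t).1 - (f p).1| < ε/2 → |(f t).2 - (f p).2| < ε/2 → g t = f p := by
    intro t h1 h2
    change f t - (cl ((f t).1 - (f p).1), cl ((f t).2 - (f p).2)) = f p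
    rw [hid _ h1, hid _ h2]
    ext <;> simp
  refine ⟨g, ?_, ?_⟩
  · change ∀ᶠ t in nhds p, g t = g p
    have hp : g p = f p := hg0 p (by simpa using hε) (by simpa using hε)
    have hball := f.continuous.continuousAt.eventually (Metric.ball_mem_nhds (f p) (half_pos hε))
    filter_upwards [hball] with t ht
    rw [hp]
    rw [Prod.dist_eq, max_lt_iff, Real.dist_eq, Real.dist_eq] at ht
    exact hg0 t ht.1 ht.2
  · refine lt_of_le_of_lt ((ContinuousMap.dist_le (half_pos hε).le).2 fun t => ?_) (half_lt_self hε)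
    change dist (f t) (f t - (cl ((f t).1 - (f p).1), cl ((f t).2 - (f p).2))) ≤ ε/2
    rw [dist_eq_norm, sub_sub_cancel, Prod.norm_def]
    exact max_le (hbd _) (hbd _)

theorem lambdaSpaceFilling_maximal_dense_lineable :
    ∃ M : Submodule ℝ C(unitInterval, ℝ × ℝ),
      Dense (M : Set C(unitInterval, ℝ × ℝ)) ∧
      Module.rank ℝ M = Cardinal.continuum ∧
      ∀ f ∈ M, f ≠ 0 → f ∈ LambdaSpaceFilling := by
  obtain ⟨h, p, hp⟩ := aux_curve
  obtain ⟨t, htD, htc, htd⟩ := (auxD_dense p).exists_countable_dense_subset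
  obtain ⟨f, rfl⟩ := htc.exists_eq_range htd.nonempty
  let g : ℝ → C(unitInterval, ℝ × ℝ) := fun r =>
    ⟨fun t => (Real.exp (Real.exp r * (h t).1), Real.exp (Real.exp r * (h t).2)), by fun_prop⟩
  let n : ℝ → ℕ := fun r => (Nat.unpair ⌊r⌋₊).1
  let k : ℝ → ℕ := fun r => (Nat.unpair ⌊r⌋₊).2
  let c : ℝ → ℝ := fun r => ((k r : ℝ) + 1) * (‖g r‖ + 1)
  have hc : ∀ r, 0 < c r := fun r => by positivity
  let L := Finsupp.linearCombination ℝ (fun r => c r • f (n r))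
  let T := Finsupp.linearCombination ℝ g
  have hL : ∀ v, L v ∈ auxD p := by
    intro v
    simp only [L, Finsupp.linearCombination_apply, Finsupp.sum]
    exact Submodule.sum_mem _ fun r _ => Submodule.smul_mem _ _
      (Submodule.smul_mem _ _ (htD ⟨_, rfl⟩))
  have hT : ∀ v t, T v t = (auxP v (h t).1, auxP v (h t).2) := by
    intro v t
    simp only [T, Finsupp.linearCombination_apply, Finsupp.sum, auxP, ContinuousMap.sum_apply]
    ext
    · simp [g, Prod.fst_sum]
    · simp [g, Prod.snd_sum]
  have hpos : ∀ v, v ≠ 0 → 0 < MeasureTheory.volume (Set.range ⇑((L + T) v)) := by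
    intro v hv
    refine lt_of_lt_of_le (auxP_image2 v hv _ (hp _ (hL v)) (L v p))
      (MeasureTheory.measure_mono ?_)
    rintro _ ⟨_, ⟨t, ht, rfl⟩, rfl⟩
    refine ⟨t, ?_⟩
    have ht' : L v t = L v p := ht
    simp only [LinearMap.add_apply, ContinuousMap.add_apply, hT, ht']
  have hinj : Function.Injective (L + T) := by
    rw [injective_iff_map_eq_zero]
    intro v hv
    by_contra hne
    have h1 := hpos v hne
    rw [hv] at h1
    have h2 : Set.range ⇑(0 : C(unitInterval, ℝ × ℝ)) ⊆ {0} := by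
      rintro _ ⟨t, rfl⟩; rfl
    have h3 := MeasureTheory.measure_mono (μ := MeasureTheory.volume) h2
    rw [MeasureTheory.measure_singleton] at h3
    exact absurd h1 (not_lt.2 h3)
  refine ⟨LinearMap.range (L + T), ?_, ?_, ?_⟩
  · rw [← dense_closure]
    refine htd.mono ?_
    rintro _ ⟨i, rfl⟩
    rw [Metric.mem_closure_iff]
    intro ε hε
    obtain ⟨j, hj⟩ := exists_nat_one_div_lt hε
    let r : ℝ := (Nat.pair i j : ℕ)
    have hn : n r = i := by simp [n, r]
    have hk : k r = j := by simp [k, r]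
    refine ⟨(L + T) (Finsupp.single r (c r)⁻¹), ⟨_, rfl⟩, ?_⟩
    have : (L + T) (Finsupp.single r (c r)⁻¹) = f i + (c r)⁻¹ • g r := by
      simp only [LinearMap.add_apply, L, T, Finsupp.linearCombination_single, hn]
      rw [smul_smul, inv_mul_cancel₀ (hc r).ne', one_smul]
    rw [this, dist_self_add_right, norm_smul, Real.norm_of_nonneg (inv_nonneg.2 (hc r).le)]
    refine lt_of_le_of_lt ?_ hj
    rw [inv_mul_le_iff₀ (hc r)]
    have : c r * (1 / ((j : ℝ) + 1)) = ‖g r‖ + 1 := by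
      simp only [c, hk]
      field_simp
    rw [this]
    linarith
  · rw [← (LinearEquiv.ofInjective _ hinj).rank_eq, rank_finsupp_self', Cardinal.mk_real]
  · rintro _ ⟨v, rfl⟩ hne
    exact hpos v (by rintro rfl; simp at hne)
end

section
/- The family 𝒮ℱ of space-filling curves is strongly algebrable in C(I,ℝ²) regarded as a commutative ℝ-algebra under pointwise coordinatewise operations: there exists a sequence (f_n)_{n≥1} in C(I,ℝ²) such that for every N ∈ ℕ, every injective choice of indices n₁, …, n_N ∈ ℕ, and every nonzero real polynomial P in N variables with zero constant term, the function P(f_{n₁}, …, f_{n_N}) (evaluated in the algebra C(I,ℝ²)) is a space-filling curve; in particular P(f_{n₁}, …, f_{n_N}) ≠ 0, so (f_n)_{n≥1} generates a free infinitely generated subalgebra all of whose nonzero elements lie in 𝒮ℱ. -/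
/-- A continuous surjection from the unit interval onto the square of the Hilbert cube. -/
theorem exists_cube_curve_s17 :
    ∃ g : C(unitInterval, (ℕ → unitInterval) × (ℕ → unitInterval)), Function.Surjective g := by
  let : MetricSpace ((ℕ → unitInterval) × (ℕ → unitInterval)) :=
    TopologicalSpace.metrizableSpaceMetric _
  obtain ⟨F, hFc, hFs⟩ := exists_nat_bool_continuous_surjective_of_compact
    ((ℕ → unitInterval) × (ℕ → unitInterval))
  let e : (ℕ → Bool) → unitInterval := fun b =>
    ⟨(cantorSetHomeomorphNatToBool.symm b : ℝ),
      cantorSet_subset_unitInterval (cantorSetHomeomorphNatToBool.symm b).2⟩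
  have hec : Continuous e := by
    refine Continuous.subtype_mk ?_ _
    exact continuous_subtype_val.comp cantorSetHomeomorphNatToBool.symm.continuous
  have hei : Function.Injective e := by
    intro a b h
    apply cantorSetHomeomorphNatToBool.symm.injective
    apply Subtype.ext
    exact congrArg (fun x : unitInterval => (x : ℝ)) h
  obtain ⟨g, hg⟩ := ContinuousMap.exists_extension' (hec.isClosedEmbedding hei)
    (⟨F, hFc⟩ : C(ℕ → Bool, (ℕ → unitInterval) × (ℕ → unitInterval)))
  refine ⟨g, fun y => ?_⟩
  obtain ⟨b, rfl⟩ := hFs y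
  exact ⟨e b, congrFun hg b⟩

/-- The family 𝒮ℱ is strongly algebrable in the commutative ℝ-algebra `C(I, ℝ×ℝ)`
(pointwise coordinatewise operations): there is a sequence whose members generate a
free infinitely generated subalgebra all of whose nonzero elements are space-filling. -/
theorem spaceFilling_strongly_algebrable :
    ∃ f : ℕ → C(unitInterval, ℝ × ℝ),
      ∀ (N : ℕ) (n : Fin N → ℕ), Function.Injective n →
        ∀ P : MvPolynomial (Fin N) ℝ, P ≠ 0 → MvPolynomial.coeff 0 P = 0 →
          MvPolynomial.aeval (fun i => f (n i)) P ∈ SpaceFilling ∧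
          MvPolynomial.aeval (fun i => f (n i)) P ≠ 0 := by
  obtain ⟨g, hg⟩ := exists_cube_curve_s17
  refine ⟨fun k => ⟨fun t => (((g t).1 k : ℝ), ((g t).2 k : ℝ)), by fun_prop⟩, ?_⟩
  intro N n hn P hP hP0
  set φ : C(unitInterval, ℝ × ℝ) := MvPolynomial.aeval (fun i =>
    (⟨fun t => (((g t).1 (n i) : ℝ), ((g t).2 (n i) : ℝ)), by fun_prop⟩ :
      C(unitInterval, ℝ × ℝ))) P with hφ
  let h : (ℕ → unitInterval) → ℝ := fun x => MvPolynomial.eval (fun i => (x (n i) : ℝ)) P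
  have hval : ∀ t, φ t = (h (g t).1, h (g t).2) := by
    intro t
    clear_value φ
    subst hφ
    clear hP hP0
    induction P using MvPolynomial.induction_on with
    | C a => simp [h, MvPolynomial.algebraMap_eq, Prod.ext_iff]
    | add p q hp hq => simp [h, hp, hq]
    | mul_X p i hp => simp [h, hp]
  have hc : Continuous h := by
    have := MvPolynomial.continuous_eval P
    exact this.comp (by fun_prop)
  have hrange : Set.range φ = Set.range h ×ˢ Set.range h := by
    ext ⟨a, b⟩
    constructor
    · rintro ⟨t, ht⟩
      rw [hval] at ht
      exact ⟨⟨_, congrArg Prod.fst ht⟩, ⟨_, congrArg Prod.snd ht⟩⟩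
    · rintro ⟨⟨x, hx⟩, ⟨y, hy⟩⟩
      obtain ⟨t, ht⟩ := hg (x, y)
      refine ⟨t, ?_⟩
      rw [hval, ht]
      exact Prod.ext hx hy
  have hIcc := eq_Icc_of_connected_compact (isConnected_range hc) (isCompact_range hc)
  set a := sInf (Set.range h)
  set b := sSup (Set.range h)
  have hab : a < b := by
    by_contra hba
    apply hP
    have hconst : P = MvPolynomial.C a := by
      refine MvPolynomial.funext_set (fun _ => Set.Icc (0 : ℝ) 1)
        (fun _ => Set.Icc_infinite zero_lt_one) ?_
      intro x hx
      let y : ℕ → unitInterval := Function.extend n (fun i => ⟨x i, hx i trivial⟩) 0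
      have hy : h y = MvPolynomial.eval x P := by
        simp only [h, y, hn.extend_apply]
      have hm : h y ∈ Set.Icc a b := hIcc ▸ Set.mem_range_self y
      rw [MvPolynomial.eval_C, ← hy]
      exact le_antisymm (hm.2.trans (not_lt.mp hba)) hm.1
    rw [hconst] at hP0 ⊢
    simp at hP0
    simp [hP0]
  have hint : (interior (Set.range φ)).Nonempty := by
    rw [hrange, hIcc, interior_prod_eq, interior_Icc]
    exact (Set.nonempty_Ioo.2 hab).prod (Set.nonempty_Ioo.2 hab)
  refine ⟨⟨?_, hint⟩, ?_⟩
  · rw [hrange, hIcc]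
    exact ((convex_Icc a b).prod (convex_Icc a b)).addHaar_frontier _
  · intro h0
    have : Set.range φ ⊆ {0} := by
      rintro _ ⟨t, rfl⟩
      simp [h0]
    have h1 := hint.mono (interior_mono this)
    simp at h1
end

section
/- Let S¹ = {(x,y) ∈ ℝ² : x² + y² = 1} and let f : I → S¹ be given by f(t) = (cos(4πt), sin(4πt)). Then every continuous map g : I → S¹ satisfying sup_{t ∈ I} d_∞(g(t), f(t)) < 1/2 is surjective onto S¹. In particular, the set CS(I,S¹) of continuous surjections I → S¹ has nonempty interior in C(I,S¹) endowed with the uniform metric. -/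
/-- The unit circle `S¹ = {(x,y) ∈ ℝ² : x² + y² = 1}`, as a subset of `ℝ × ℝ`
(the latter carrying the maximum metric `d_∞`). -/
def circleSet : Set (ℝ × ℝ) := {p | p.1 ^ 2 + p.2 ^ 2 = 1}

lemma circle_angle (x y : ℝ) (h : x ^ 2 + y ^ 2 = 1) :
    ∃ a : ℝ, -Real.pi ≤ a ∧ a ≤ Real.pi ∧ Real.cos a = x ∧ Real.sin a = y := by
  have h1 : -1 ≤ x := by nlinarith [sq_nonneg y]
  have h2 : x ≤ 1 := by nlinarith [sq_nonneg y]
  have h0 := Real.arccos_nonneg x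
  have h3 := Real.arccos_le_pi x
  have h4 : 1 - x ^ 2 = y ^ 2 := by linarith
  rcases le_total 0 y with hy | hy
  · refine ⟨Real.arccos x, by linarith, h3, Real.cos_arccos h1 h2, ?_⟩
    rw [Real.sin_arccos, h4, Real.sqrt_sq hy]
  · refine ⟨-Real.arccos x, by linarith, by linarith, ?_, ?_⟩
    · rw [Real.cos_neg, Real.cos_arccos h1 h2]
    · rw [Real.sin_neg, Real.sin_arccos, h4, Real.sqrt_sq_eq_abs, abs_of_nonpos hy, neg_neg]

lemma circle_surj
    (f : C(unitInterval, circleSet))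
    (hf : ∀ t : unitInterval,
      (f t : ℝ × ℝ) = (Real.cos (4 * Real.pi * t), Real.sin (4 * Real.pi * t)))
    (g : C(unitInterval, circleSet)) (hg : dist g f < 1 / 2) : Function.Surjective ⇑g := by
  rintro ⟨⟨x, y⟩, hp⟩
  obtain ⟨a, ha1, ha2, hx, hy⟩ := circle_angle x y hp
  have hd : ∀ t, |(g t : ℝ × ℝ).1 - Real.cos (4 * Real.pi * t)| < 1 / 2 ∧
      |(g t : ℝ × ℝ).2 - Real.sin (4 * Real.pi * t)| < 1 / 2 := by
    intro t
    have h := lt_of_le_of_lt (ContinuousMap.dist_apply_le_dist t) hg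
    rw [Subtype.dist_eq, hf t, Prod.dist_eq, max_lt_iff, Real.dist_eq, Real.dist_eq] at h
    exact h
  set v : unitInterval → ℝ := fun t =>
    (g t : ℝ × ℝ).2 * Real.cos (4 * Real.pi * t) - (g t : ℝ × ℝ).1 * Real.sin (4 * Real.pi * t)
    with hv
  set θ : unitInterval → ℝ := fun t => 4 * Real.pi * t + Real.arcsin (v t) with hθ
  have hvc : Continuous v := by fun_prop
  have hc : Continuous θ := by
    have := Real.continuous_arcsin.comp hvc
    exact (by fun_prop : Continuous fun t : unitInterval => 4 * Real.pi * (t : ℝ)).add this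
  have key : ∀ t, Real.cos (θ t) = (g t : ℝ × ℝ).1 ∧ Real.sin (θ t) = (g t : ℝ × ℝ).2 := by
    intro t
    have hgt : (g t : ℝ × ℝ).1 ^ 2 + (g t : ℝ × ℝ).2 ^ 2 = 1 := (g t).2
    obtain ⟨d1, d2⟩ := hd t
    have e1 := sq_lt_sq' (abs_lt.1 d1).1 (abs_lt.1 d1).2
    have e2 := sq_lt_sq' (abs_lt.1 d2).1 (abs_lt.1 d2).2
    have hcs := Real.sin_sq_add_cos_sq (4 * Real.pi * t)
    simp only [hθ, Real.cos_add, Real.sin_add, Real.cos_arcsin]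
    have hvt : v t = (g t : ℝ × ℝ).2 * Real.cos (4 * Real.pi * t)
      - (g t : ℝ × ℝ).1 * Real.sin (4 * Real.pi * t) := rfl
    generalize v t = w at *
    generalize (g t : ℝ × ℝ).1 = p at *
    generalize (g t : ℝ × ℝ).2 = q at *
    generalize Real.cos (4 * Real.pi * t) = c at *
    generalize Real.sin (4 * Real.pi * t) = s at *
    have hu : 0 ≤ p * c + q * s := by nlinarith
    have huv : (p * c + q * s) ^ 2 + w ^ 2 = 1 := by
      rw [hvt]
      linear_combination (p ^ 2 + q ^ 2) * hcs + hgt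
    have hw1 : -1 ≤ w := by nlinarith [sq_nonneg (p * c + q * s)]
    have hw2 : w ≤ 1 := by nlinarith [sq_nonneg (p * c + q * s)]
    rw [Real.sin_arcsin hw1 hw2, show 1 - w ^ 2 = (p * c + q * s) ^ 2 by linarith,
      Real.sqrt_sq hu, hvt]
    constructor
    · linear_combination p * hcs
    · linear_combination q * hcs
  have hpi := Real.pi_pos
  have h0 : θ 0 ≤ a + 2 * Real.pi := by
    have := Real.arcsin_le_pi_div_two (v 0)
    simp only [hθ, Set.Icc.coe_zero]
    linarith
  have h1 : a + 2 * Real.pi ≤ θ 1 := by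
    have := Real.neg_pi_div_two_le_arcsin (v 1)
    simp only [hθ, Set.Icc.coe_one]
    linarith
  obtain ⟨t, ht⟩ := mem_range_of_exists_le_of_exists_ge hc ⟨0, h0⟩ ⟨1, h1⟩
  obtain ⟨k1, k2⟩ := key t
  rw [ht, Real.cos_add_two_pi] at k1
  rw [ht, Real.sin_add_two_pi] at k2
  refine ⟨t, Subtype.ext (Prod.ext ?_ ?_)⟩
  · exact k1.symm.trans hx
  · exact k2.symm.trans hy

theorem circle_surjections_nonempty_interior
    (f : C(unitInterval, circleSet))
    (hf : ∀ t : unitInterval,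
      (f t : ℝ × ℝ) = (Real.cos (4 * Real.pi * t), Real.sin (4 * Real.pi * t))) :
    (∀ g : C(unitInterval, circleSet), dist g f < 1 / 2 → Function.Surjective ⇑g) ∧
    (interior {g : C(unitInterval, circleSet) | Function.Surjective ⇑g}).Nonempty := by
  refine ⟨circle_surj f hf, f, ?_⟩
  rw [mem_interior_iff_mem_nhds]
  exact Filter.mem_of_superset (Metric.ball_mem_nhds f (by norm_num : (0 : ℝ) < 1 / 2))
    fun g hg => circle_surj f hf g hg
end

section
/- The set 𝒫 = CS(I,I²) of Peano curves is path-connected as a subspace of C(I,I²) endowed with the uniform metric ρ: for any two continuous surjections f, g : I → I² there exists a continuous path γ : [0,1] → C(I,I²) with γ(0) = f, γ(1) = g, and γ(s) a continuous surjection of I onto I² for every s ∈ [0,1]. -/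
/-- Clamp a real number to the unit interval. -/
noncomputable def clampI (x : ℝ) : unitInterval := Set.projIcc 0 1 zero_le_one x

theorem continuous_clampI : Continuous clampI := continuous_projIcc (h := zero_le_one)

theorem clampI_coe (x : unitInterval) : clampI (x : ℝ) = x := Set.projIcc_val zero_le_one x

theorem clampI_nonpos {x : ℝ} (h : x ≤ 0) : clampI x = 0 := Set.projIcc_of_le_left zero_le_one h

theorem clampI_ge_one {x : ℝ} (h : 1 ≤ x) : clampI x = 1 := Set.projIcc_of_right_le zero_le_one h

/-- Affine interpolation in the unit square. -/
noncomputable def mixI (w : unitInterval) (p q : unitInterval × unitInterval) :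
    unitInterval × unitInterval :=
  (clampI ((1 - w) * p.1 + w * q.1), clampI ((1 - w) * p.2 + w * q.2))

theorem mixI_zero (p q : unitInterval × unitInterval) : mixI 0 p q = p := by
  simp [mixI, clampI_coe]

theorem mixI_one (p q : unitInterval × unitInterval) : mixI 1 p q = q := by
  simp [mixI, clampI_coe]

/-- Speed of the reparametrization. -/
noncomputable def speedI (s : ℝ) : ℝ := min 3 (min (1 + 6 * s) (7 - 6 * s))

/-- The homotopy. -/
noncomputable def homI (f g : C(unitInterval, unitInterval × unitInterval))
    (s t : ℝ) : unitInterval × unitInterval :=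
  mixI (clampI (3 * t - 1 + (12 * s - 6))) (f (clampI (speedI s * t)))
    (g (clampI (1 - speedI s * (1 - t))))

theorem continuous_homI (f g : C(unitInterval, unitInterval × unitInterval)) :
    Continuous (fun p : unitInterval × unitInterval => homI f g p.1 p.2) := by
  have := continuous_clampI
  have hs : Continuous speedI := by unfold speedI; fun_prop
  unfold homI mixI
  fun_prop

theorem speedI_ge_one {s : ℝ} (h0 : 0 ≤ s) (h1 : s ≤ 1) : 1 ≤ speedI s := by
  unfold speedI
  refine le_min (by norm_num) (le_min ?_ ?_) <;> linarith

theorem speedI_mid {s : ℝ} (h0 : 1 / 3 ≤ s) (h1 : s ≤ 2 / 3) : speedI s = 3 := by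
  unfold speedI
  refine min_eq_left (le_min ?_ ?_) <;> linarith

theorem homI_surj (f g : C(unitInterval, unitInterval × unitInterval))
    (hf : Function.Surjective ⇑f) (hg : Function.Surjective ⇑g) (s : unitInterval) :
    Function.Surjective (fun t : unitInterval => homI f g s t) := by
  intro z
  have ha := speedI_ge_one s.2.1 s.2.2
  have ha0 : 0 < speedI s := by linarith
  rcases le_total (s : ℝ) (1 / 2) with hs | hs
  · obtain ⟨y, rfl⟩ := hf z
    have hy0 := y.2.1
    have hy1 := y.2.2
    have ht1 : (y : ℝ) / speedI s ≤ 1 := by rw [div_le_one ha0]; linarith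
    refine ⟨⟨(y : ℝ) / speedI s, by positivity, ht1⟩, ?_⟩
    have hw : 3 * ((y : ℝ) / speedI s) - 1 + (12 * (s : ℝ) - 6) ≤ 0 := by
      rcases le_total (s : ℝ) (1 / 3) with h | h
      · linarith
      · rw [speedI_mid h (by linarith)]; linarith
    simp only [homI]
    rw [clampI_nonpos hw, mixI_zero, mul_div_cancel₀ _ ha0.ne', clampI_coe]
  · obtain ⟨y, rfl⟩ := hg z
    have hy0 := y.2.1
    have hy1 := y.2.2
    have ht1 : (1 - (y : ℝ)) / speedI s ≤ 1 := by rw [div_le_one ha0]; linarith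
    have ht0 : 0 ≤ (1 - (y : ℝ)) / speedI s := div_nonneg (by linarith) ha0.le
    refine ⟨⟨1 - (1 - (y : ℝ)) / speedI s, by linarith, by linarith⟩, ?_⟩
    have hw : 1 ≤ 3 * (1 - (1 - (y : ℝ)) / speedI s) - 1 + (12 * (s : ℝ) - 6) := by
      rcases le_total (2 / 3) (s : ℝ) with h | h
      · linarith
      · rw [speedI_mid (by linarith) h]; linarith
    simp only [homI]
    rw [clampI_ge_one hw, mixI_one, sub_sub_cancel, mul_div_cancel₀ _ ha0.ne', sub_sub_cancel,
      clampI_coe]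

theorem peano_pathConnected (f g : C(unitInterval, unitInterval × unitInterval))
    (hf : Function.Surjective ⇑f) (hg : Function.Surjective ⇑g) :
    ∃ γ : C(unitInterval, C(unitInterval, unitInterval × unitInterval)),
      γ 0 = f ∧ γ 1 = g ∧ ∀ s, Function.Surjective ⇑(γ s) := by
  refine ⟨ContinuousMap.curry ⟨_, continuous_homI f g⟩, ?_, ?_, fun s => homI_surj f g hf hg s⟩
  · refine ContinuousMap.ext fun t => ?_
    change homI f g ((0 : unitInterval) : ℝ) t = f t
    have h1 := t.2.2
    have hsp : speedI 0 = 1 := by norm_num [speedI]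
    simp only [homI, Set.Icc.coe_zero]
    rw [clampI_nonpos (by linarith), mixI_zero, hsp, one_mul, clampI_coe]
  · refine ContinuousMap.ext fun t => ?_
    change homI f g ((1 : unitInterval) : ℝ) t = g t
    have h0 := t.2.1
    have hsp : speedI 1 = 1 := by norm_num [speedI]
    simp only [homI, Set.Icc.coe_one]
    rw [clampI_ge_one (by linarith), mixI_one, hsp, one_mul, sub_sub_cancel, clampI_coe]
end
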